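/- arXiv:math/0701389 — 14 statements merged into one kernel-verified Lean document; each statement's English description precedes it below -/
import Mathlib

section
/- Let 𝔤 be a finite-dimensional real Lie algebra with an ad-invariant inner product Q, let 𝔨 ⊆ 𝔤 be an abelian Lie subalgebra (⁅𝔨,𝔨⁆ = 0) with Q-orthogonal complement 𝔪, and for t > 0 let P_t be the linear automorphism of 𝔤 equal to t·id on 𝔨 and id on 𝔪. If 0 < t ≤ 4/3, then for all X, Y ∈ 𝔤 the unnormalized sectional curvature κ_{P_t}(X,Y) given by Püttmann's formula is non-negative; i.e. the left-invariant metric Q_t = tQ|_𝔨 + Q|_{𝔨^⊥} has non-negative sectional curvature as long as t ≤ 4/3. -/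
/-- The bilinear expression `B(X,Y) = (1/2)(⁅X,PY⁆ − ⁅PX,Y⁆)` from Püttmann's
curvature formula. -/
noncomputable def puttmannB {L : Type*} [LieRing L] [LieAlgebra ℝ L]
    (P : L →ₗ[ℝ] L) (X Y : L) : L :=
  (1 / 2 : ℝ) • (⁅X, P Y⁆ - ⁅P X, Y⁆)

/-- Püttmann's formula for the unnormalized sectional curvature of the
left-invariant metric `⟨X,Y⟩ = Q(PX,Y)`:
`κ_P(X,Y) = (1/2)Q(⁅PX,Y⁆+⁅X,PY⁆,⁅X,Y⁆) − (3/4)Q(P⁅X,Y⁆,⁅X,Y⁆)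
  + Q(B(X,Y),P⁻¹B(X,Y)) − Q(B(X,X),P⁻¹B(Y,Y))`. -/
noncomputable def puttmannKappa {L : Type*} [LieRing L] [LieAlgebra ℝ L]
    (Q : L →ₗ[ℝ] L →ₗ[ℝ] ℝ) (P Pinv : L →ₗ[ℝ] L) (X Y : L) : ℝ :=
  (1 / 2) * Q (⁅P X, Y⁆ + ⁅X, P Y⁆) ⁅X, Y⁆
    - (3 / 4) * Q (P ⁅X, Y⁆) ⁅X, Y⁆
    + Q (puttmannB P X Y) (Pinv (puttmannB P X Y))
    - Q (puttmannB P X X) (Pinv (puttmannB P Y Y))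

/-!
Write `X = a + x` and `Y = b + y` along `𝔤 = 𝔨 ⊕ 𝔨^⊥`, and put `d = ⁅a, y⁆ - ⁅b, x⁆`. As `𝔨` is
abelian, `ad 𝔨` preserves `𝔨^⊥`, so `⁅X, Y⁆ = d + ⁅x, y⁆` with `d ∈ 𝔨^⊥`. Moreover `ad a` and `ad b`
commute, so `Q(⁅a, x⁆, ⁅b, y⁆) = Q(⁅b, x⁆, ⁅a, y⁆)`, which makes the two `B`-terms of Püttmann's
formula add up to `((1 - t) / 2)² |d|²`. Completing the square,
`κ(X, Y) = (1 - 3t/4) |⁅x, y⁆_𝔨|² + (1/4) |t d + ⁅x, y⁆_{𝔨^⊥}|²`.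
-/

open LinearMap (BilinForm)

theorem isCompl_orthogonal_of_anisotropic {K V : Type*} [Field K] [AddCommGroup V] [Module K V]
    [FiniteDimensional K V] {Q : BilinForm K V} (hQ : Q.IsRefl) {W : Submodule K V}
    (hW : ∀ v ∈ W, v ≠ 0 → Q v v ≠ 0) : IsCompl W (Q.orthogonal W) :=
  (BilinForm.isCompl_orthogonal_iff_disjoint hQ).2 <|
    Submodule.disjoint_def.2 fun v hv hv' ↦ not_imp_not.1 (hW v hv) (hv' v hv)

theorem isPosSemidef_of_pos {R M : Type*} [CommSemiring R] [PartialOrder R] [AddCommMonoid M]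
    [Module R M] {Q : BilinForm R M} (hQsymm : Q.IsSymm) (hQpos : ∀ v, v ≠ 0 → 0 < Q v v) :
    Q.IsPosSemidef where
  isSymm := hQsymm
  nonneg v := by
    obtain rfl | hv := eq_or_ne v 0
    · rw [map_zero]
    · exact (hQpos v hv).le

section LieModule

variable {R L M : Type*} [CommRing R] [LieRing L] [AddCommGroup M] [Module R M]
  [LieRingModule L M] {Q : BilinForm R M}

theorem lie_mem_orthogonal (hQ : Q.lieInvariant L) {N : Submodule R M} {a : L}
    (ha : ∀ n ∈ N, ⁅a, n⁆ ∈ N) {x : M} (hx : x ∈ Q.orthogonal N) : ⁅a, x⁆ ∈ Q.orthogonal N := by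
  intro n hn
  have hax : Q ⁅a, n⁆ x = 0 := hx _ (ha n hn)
  exact neg_eq_zero.1 ((hQ a n x).symm.trans hax)

theorem form_lie_lie_comm (hQ : Q.lieInvariant L) {a b : L} (hab : ⁅a, b⁆ = 0) (x y : M) :
    Q ⁅a, x⁆ ⁅b, y⁆ = Q ⁅b, x⁆ ⁅a, y⁆ := by
  have hcomm : ⁅a, ⁅b, y⁆⁆ = ⁅b, ⁅a, y⁆⁆ := by rw [leibniz_lie, hab, zero_lie, zero_add]
  rw [hQ, hQ, hcomm]

end LieModule

theorem lie_mem_orthogonal_of_abelian {R L : Type*} [CommRing R] [LieRing L] [Module R L]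
    {Q : BilinForm R L} (hQ : Q.lieInvariant L) {k : Submodule R L}
    (hk : ∀ X ∈ k, ∀ Y ∈ k, ⁅X, Y⁆ = 0) {a x : L} (ha : a ∈ k) (hx : x ∈ Q.orthogonal k) :
    ⁅a, x⁆ ∈ Q.orthogonal k :=
  lie_mem_orthogonal hQ (fun n hn ↦ hk a ha n hn ▸ k.zero_mem) hx

theorem lie_smul_add_smul_add_of_lie_eq_zero {R L : Type*} [CommRing R] [LieRing L]
    [LieAlgebra R L] {a b : L} (hab : ⁅a, b⁆ = 0) (s r : R) (x y : L) :
    ⁅s • a + x, r • b + y⁆ = s • ⁅a, y⁆ - r • ⁅b, x⁆ + ⁅x, y⁆ := by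
  simp only [add_lie, lie_add, smul_lie, lie_smul, hab, smul_zero, ← lie_skew x b]
  module

section Puttmann

variable {L : Type*} [LieRing L] [LieAlgebra ℝ L] {Q : BilinForm ℝ L} {P Pinv : L →ₗ[ℝ] L} {t : ℝ}

theorem puttmannB_add_add {a b x y : L} (hab : ⁅a, b⁆ = 0) (ha : P a = t • a) (hb : P b = t • b)
    (hx : P x = x) (hy : P y = y) :
    puttmannB P (a + x) (b + y) = ((1 - t) / 2) • (⁅a, y⁆ + ⁅b, x⁆) := by
  have hXPY := lie_smul_add_smul_add_of_lie_eq_zero hab 1 t x y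
  have hPXY := lie_smul_add_smul_add_of_lie_eq_zero hab t 1 x y
  rw [one_smul] at hXPY hPXY
  rw [puttmannB, map_add, map_add, ha, hb, hx, hy, hXPY, hPXY]
  module

theorem form_puttmannB_sub_form_puttmannB (hQsymm : Q.IsSymm) (hQ : Q.lieInvariant L) {a b x y : L}
    (hab : ⁅a, b⁆ = 0) (ha : P a = t • a) (hb : P b = t • b) (hx : P x = x) (hy : P y = y) :
    Q (puttmannB P (a + x) (b + y)) (puttmannB P (a + x) (b + y))
        - Q (puttmannB P (a + x) (a + x)) (puttmannB P (b + y) (b + y))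
      = ((1 - t) / 2) ^ 2 * Q (⁅a, y⁆ - ⁅b, x⁆) (⁅a, y⁆ - ⁅b, x⁆) := by
  rw [puttmannB_add_add hab ha hb hx hy, puttmannB_add_add (lie_self a) ha ha hx hx,
    puttmannB_add_add (lie_self b) hb hb hy hy]
  simp only [map_add, map_sub, map_smul, LinearMap.add_apply, LinearMap.sub_apply,
    LinearMap.smul_apply, smul_eq_mul, form_lie_lie_comm hQ hab x y, hQsymm.eq ⁅a, y⁆ ⁅b, x⁆]
  ring

variable {k : Submodule ℝ L}

theorem puttmannB_add_add_mem_orthogonal (hQ : Q.lieInvariant L)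
    (hk : ∀ X ∈ k, ∀ Y ∈ k, ⁅X, Y⁆ = 0) (hPk : ∀ X ∈ k, P X = t • X)
    (hPm : ∀ X ∈ Q.orthogonal k, P X = X) {a b x y : L} (ha : a ∈ k) (hb : b ∈ k)
    (hx : x ∈ Q.orthogonal k) (hy : y ∈ Q.orthogonal k) :
    puttmannB P (a + x) (b + y) ∈ Q.orthogonal k := by
  rw [puttmannB_add_add (hk a ha b hb) (hPk a ha) (hPk b hb) (hPm x hx) (hPm y hy)]
  exact Submodule.smul_mem _ _ (add_mem (lie_mem_orthogonal_of_abelian hQ hk ha hy)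
    (lie_mem_orthogonal_of_abelian hQ hk hb hx))

theorem puttmannKappa_add_add (hQsymm : Q.IsSymm) (hQ : Q.lieInvariant L)
    (hk : ∀ X ∈ k, ∀ Y ∈ k, ⁅X, Y⁆ = 0) (hPk : ∀ X ∈ k, P X = t • X)
    (hPm : ∀ X ∈ Q.orthogonal k, P X = X) (hPinv : Pinv.comp P = LinearMap.id)
    {a b z : L} (ha : a ∈ k) (hb : b ∈ k) (hz : z ∈ k)
    {x y w : L} (hx : x ∈ Q.orthogonal k) (hy : y ∈ Q.orthogonal k) (hw : w ∈ Q.orthogonal k)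
    (hxy : ⁅x, y⁆ = z + w) :
    puttmannKappa Q P Pinv (a + x) (b + y) =
      (1 - 3 / 4 * t) * Q z z
        + 1 / 4 * Q (t • (⁅a, y⁆ - ⁅b, x⁆) + w) (t • (⁅a, y⁆ - ⁅b, x⁆) + w) := by
  have hPinvB {c e v u : L} (hc : c ∈ k) (he : e ∈ k) (hv : v ∈ Q.orthogonal k)
      (hu : u ∈ Q.orthogonal k) :
      Pinv (puttmannB P (c + v) (e + u)) = puttmannB P (c + v) (e + u) := by
    have hB := hPm _ (puttmannB_add_add_mem_orthogonal hQ hk hPk hPm hc he hv hu)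
    have hPB := LinearMap.congr_fun hPinv (puttmannB P (c + v) (e + u))
    rwa [LinearMap.comp_apply, hB] at hPB
  have hBB := form_puttmannB_sub_form_puttmannB hQsymm hQ (hk a ha b hb) (hPk a ha) (hPk b hb)
    (hPm x hx) (hPm y hy)
  have hd : ⁅a, y⁆ - ⁅b, x⁆ ∈ Q.orthogonal k :=
    sub_mem (lie_mem_orthogonal_of_abelian hQ hk ha hy) (lie_mem_orthogonal_of_abelian hQ hk hb hx)
  have hlie (s r : ℝ) : ⁅s • a + x, r • b + y⁆ = s • ⁅a, y⁆ - r • ⁅b, x⁆ + (z + w) :=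
    hxy ▸ lie_smul_add_smul_add_of_lie_eq_zero (hk a ha b hb) s r x y
  have hXY : ⁅a + x, b + y⁆ = z + (⁅a, y⁆ - ⁅b, x⁆ + w) := by
    simpa only [one_smul, add_left_comm] using hlie 1 1
  have hsum : ⁅P (a + x), b + y⁆ + ⁅a + x, P (b + y)⁆
      = (2 : ℝ) • z + ((1 + t) • (⁅a, y⁆ - ⁅b, x⁆) + (2 : ℝ) • w) := by
    have hPXY := hlie t 1
    have hXPY := hlie 1 t
    rw [one_smul] at hPXY hXPY
    rw [map_add, map_add, hPk a ha, hPk b hb, hPm x hx, hPm y hy, hPXY, hXPY]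
    module
  have hP_lie : P ⁅a + x, b + y⁆ = t • z + (⁅a, y⁆ - ⁅b, x⁆ + w) := by
    rw [hXY, map_add, hPk z hz, hPm _ (add_mem hd hw)]
  have hzd : Q z (⁅a, y⁆ - ⁅b, x⁆) = 0 := hd z hz
  have hzw : Q z w = 0 := hw z hz
  rw [puttmannKappa, hPinvB ha hb hx hy, hPinvB hb hb hy hy, add_sub_assoc, hBB, hsum, hP_lie, hXY]
  generalize ⁅a, y⁆ - ⁅b, x⁆ = d at *
  simp only [map_add, map_smul, LinearMap.add_apply, LinearMap.smul_apply, smul_eq_mul,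
    hQsymm.eq d z, hQsymm.eq w z, hQsymm.eq w d, hzd, hzw]
  ring

end Puttmann

theorem leftInvariant_nonneg_curv_abelian_scaling_general
    {L : Type*} [LieRing L] [LieAlgebra ℝ L] {Q : BilinForm ℝ L} (hQpos : Q.IsPosSemidef)
    (hQ : Q.lieInvariant L) {k : Submodule ℝ L} (hcodisj : Codisjoint k (Q.orthogonal k))
    (hk : ∀ X ∈ k, ∀ Y ∈ k, ⁅X, Y⁆ = 0) {t : ℝ} (ht : t ≤ 4 / 3) {P Pinv : L →ₗ[ℝ] L}
    (hPk : ∀ X ∈ k, P X = t • X) (hPm : ∀ X ∈ Q.orthogonal k, P X = X)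
    (hPinv : Pinv.comp P = LinearMap.id) (X Y : L) : 0 ≤ puttmannKappa Q P Pinv X Y := by
  obtain ⟨a, x, ha, hx, rfl⟩ := Submodule.codisjoint_iff_exists_add_eq.1 hcodisj X
  obtain ⟨b, y, hb, hy, rfl⟩ := Submodule.codisjoint_iff_exists_add_eq.1 hcodisj Y
  obtain ⟨z, w, hz, hw, hzw⟩ := Submodule.codisjoint_iff_exists_add_eq.1 hcodisj ⁅x, y⁆
  rw [puttmannKappa_add_add hQpos.isSymm hQ hk hPk hPm hPinv ha hb hz hx hy hw hzw.symm]
  exact add_nonneg (mul_nonneg (by linarith) (hQpos.nonneg z))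
    (mul_nonneg (by norm_num) (hQpos.nonneg _))

/-- **Grove–Ziller / Ziller, Lemma 2.5.** Let `𝔤` be a finite-dimensional real Lie
algebra with an ad-invariant inner product `Q`, `𝔨 ⊆ 𝔤` an abelian subalgebra with
`Q`-orthogonal complement `𝔪`, and `P_t = t·id` on `𝔨`, `id` on `𝔪`.  If
`0 < t ≤ 4/3` then the left-invariant metric `Q_t = tQ|𝔨 + Q|𝔨^⊥` has
non-negative sectional curvature: `κ_{P_t}(X,Y) ≥ 0` for all `X, Y`. -/
theorem leftInvariant_nonneg_curv_abelian_scaling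
    {L : Type*} [LieRing L] [LieAlgebra ℝ L] [FiniteDimensional ℝ L]
    (Q : L →ₗ[ℝ] L →ₗ[ℝ] ℝ)
    (hQsymm : ∀ X Y : L, Q X Y = Q Y X)
    (hQpos : ∀ X : L, X ≠ 0 → 0 < Q X X)
    (hQad : ∀ X Y Z : L, Q ⁅Z, X⁆ Y + Q X ⁅Z, Y⁆ = 0)
    (k m : Submodule ℝ L)
    (hkab : ∀ X ∈ k, ∀ Y ∈ k, ⁅X, Y⁆ = (0 : L))
    (hm : ∀ Y : L, Y ∈ m ↔ ∀ X ∈ k, Q X Y = 0)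
    (t : ℝ) (ht0 : 0 < t) (ht : t ≤ 4 / 3)
    (Pt PtInv : L →ₗ[ℝ] L)
    (hPtk : ∀ X ∈ k, Pt X = t • X)
    (hPtm : ∀ X ∈ m, Pt X = X)
    (hinv : PtInv.comp Pt = LinearMap.id) :
    ∀ X Y : L, 0 ≤ puttmannKappa Q Pt PtInv X Y := by
  obtain rfl : m = BilinForm.orthogonal Q k := Submodule.ext hm
  exact leftInvariant_nonneg_curv_abelian_scaling_general
    (isPosSemidef_of_pos ⟨hQsymm⟩ hQpos) (fun Z X Y ↦ eq_neg_of_add_eq_zero_left (hQad X Y Z))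
    (isCompl_orthogonal_of_anisotropic (BilinForm.IsSymm.isRefl ⟨hQsymm⟩)
      fun X _ hX ↦ (hQpos X hX).ne').codisjoint hkab ht hPtk hPtm hinv
end

section
/- Let 𝔤 be a finite-dimensional real Lie algebra with an ad-invariant inner product Q, let 𝔨 ⊆ 𝔤 be any Lie subalgebra with Q-orthogonal complement 𝔪, and for t > 0 let P_t be the linear automorphism of 𝔤 equal to t·id on 𝔨 and id on 𝔪. If 0 < t ≤ 1, then for all X, Y ∈ 𝔤 the unnormalized sectional curvature κ_{P_t}(X,Y) given by Püttmann's formula is non-negative; i.e. the left-invariant metric Q_t = tQ|_𝔨 + Q|_𝔪 has non-negative sectional curvature for t ≤ 1. -/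
/-!
Write `X = A + M` and `Y = C + N` along `𝔤 = 𝔨 ⊕ 𝔪`, and split `⁅M, N⁆ = H + V` likewise.
Since `⁅𝔨, 𝔪⁆ ⊆ 𝔪`, the vectors `B(X, X)`, `B(X, Y)`, `B(Y, Y)` lie in `𝔪`, where `P_t` is the
identity. The Jacobi identity expresses `Q(⁅A, M⁆, ⁅C, N⁆)`, coming from `Q(B(X, X), P⁻¹B(Y, Y))`,
through `Q(⁅A, C⁆, ⁅M, N⁆)` and `Q(⁅A, N⁆, ⁅C, M⁆)`, after which the curvature is a sum of squares:
`κ = t/4 |⁅A, C⁆ + (3 - 2t) H|² + (1 - t)³ |H|² + 1/4 |t (⁅A, N⁆ - ⁅C, M⁆) + V|²`.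
-/

section InvariantForm

variable {R L : Type*} [CommRing R] [LieRing L] [LieAlgebra R L] {Q : LinearMap.BilinForm R L}

theorem lie_mem_orthogonal_of_mem (hQ : Q.lieInvariant L) (k : LieSubalgebra R L) {A M : L}
    (hA : A ∈ k) (hM : M ∈ Q.orthogonal k.toSubmodule) :
    ⁅A, M⁆ ∈ Q.orthogonal k.toSubmodule :=
  (LieAlgebra.InvariantForm.orthogonal Q (fun Z : k => hQ Z) k.toLieSubmodule).lie_mem
    (x := ⟨A, hA⟩) hM

theorem apply_lie_lie_eq_add (hQ : Q.lieInvariant L) (W X Y Z : L) :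
    Q ⁅W, X⁆ ⁅Y, Z⁆ = Q ⁅W, Y⁆ ⁅X, Z⁆ + Q ⁅W, Z⁆ ⁅Y, X⁆ := by
  have jacobi : ⁅X, ⁅Y, Z⁆⁆ = ⁅Y, ⁅X, Z⁆⁆ + ⁅Z, ⁅Y, X⁆⁆ := by
    rw [leibniz_lie X Y Z, ← lie_skew ⁅X, Y⁆ Z, ← lie_skew X Y, lie_neg, neg_neg, add_comm]
  have move_bracket (U V : L) : Q ⁅W, U⁆ V = Q W ⁅U, V⁆ := by
    rw [← lie_skew, map_neg, LinearMap.neg_apply, hQ, neg_neg]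
  rw [move_bracket, move_bracket, move_bracket, jacobi, map_add]

end InvariantForm

theorem apply_add_add_of_mem_orthogonal {R V : Type*} [CommRing R] [AddCommGroup V] [Module R V]
    {Q : LinearMap.BilinForm R V} (hQ : Q.IsRefl) {W : Submodule R V} {x y u v : V}
    (hx : x ∈ W) (hy : y ∈ W) (hu : u ∈ Q.orthogonal W) (hv : v ∈ Q.orthogonal W) :
    Q (x + u) (y + v) = Q x y + Q u v := by
  simp only [map_add, LinearMap.add_apply, hv x hx, hQ _ _ (hu y hy), add_zero, zero_add]

theorem isPosSemidef_of_pos_s1 {R V : Type*} [CommSemiring R] [PartialOrder R] [AddCommMonoid V]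
    [Module R V] {Q : LinearMap.BilinForm R V} (hsymm : ∀ x y, Q x y = Q y x)
    (hpos : ∀ x, x ≠ 0 → 0 < Q x x) : Q.IsPosSemidef where
  eq := hsymm
  nonneg x := by
    rcases eq_or_ne x 0 with rfl | hx
    · rw [map_zero]
    · exact (hpos x hx).le

theorem isCompl_orthogonal_of_pos {K V : Type*} [Field K] [Preorder K] [AddCommGroup V]
    [Module K V] [FiniteDimensional K V] {Q : LinearMap.BilinForm K V} (hQ : Q.IsRefl)
    (hpos : ∀ x, x ≠ 0 → 0 < Q x x) (W : Submodule K V) : IsCompl W (Q.orthogonal W) := by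
  rw [LinearMap.BilinForm.isCompl_orthogonal_iff_disjoint hQ, Submodule.disjoint_def]
  intro x hx hx'
  by_contra hne
  exact (hpos x hne).ne' (hx' x hx)

theorem lie_add_add_eq {L : Type*} [LieRing L] {A M C N H V : L} (hMN : ⁅M, N⁆ = H + V) :
    ⁅A + M, C + N⁆ = (⁅A, C⁆ + H) + (⁅A, N⁆ - ⁅C, M⁆ + V) := by
  simp only [lie_add, add_lie, hMN, ← lie_skew M C]
  abel

theorem map_add_eq_smul_add {R V : Type*} [Semiring R] [AddCommMonoid V] [Module R V]
    {P : V →ₗ[R] V} {t : R} {W U : Submodule R V} (hPW : ∀ x ∈ W, P x = t • x)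
    (hPU : ∀ u ∈ U, P u = u) {x u : V} (hx : x ∈ W) (hu : u ∈ U) : P (x + u) = t • x + u := by
  rw [map_add, hPW x hx, hPU u hu]

section Scaling

variable {L : Type*} [LieRing L] [LieAlgebra ℝ L] {P Pinv : L →ₗ[ℝ] L} {t : ℝ} {A M C N H V : L}

theorem puttmannB_add_add_s1 (hX : P (A + M) = t • A + M) (hY : P (C + N) = t • C + N) :
    puttmannB P (A + M) (C + N) = ((1 - t) / 2) • (⁅A, N⁆ + ⁅C, M⁆) := by
  rw [puttmannB, hX, hY, ← lie_skew C M]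
  simp only [lie_add, add_lie, smul_lie, lie_smul]
  module

theorem puttmannB_add_self (hX : P (A + M) = t • A + M) :
    puttmannB P (A + M) (A + M) = (1 - t) • ⁅A, M⁆ := by
  rw [puttmannB_add_add_s1 hX hX]
  module

theorem lie_smul_add_add_lie_add_smul (hMN : ⁅M, N⁆ = H + V) :
    ⁅t • A + M, C + N⁆ + ⁅A + M, t • C + N⁆ =
      (2 : ℝ) • (t • ⁅A, C⁆ + H) + ((1 + t) • (⁅A, N⁆ - ⁅C, M⁆) + (2 : ℝ) • V) := by
  simp only [lie_add, add_lie, smul_lie, lie_smul, hMN, ← lie_skew M C]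
  module

variable {Q : LinearMap.BilinForm ℝ L} {k : LieSubalgebra ℝ L}

theorem puttmannB_terms_eq (hsymm : Q.IsSymm) (hQ : Q.lieInvariant L)
    (hPinv : ∀ X ∈ Q.orthogonal k.toSubmodule, Pinv X = X)
    (hA : A ∈ k) (hM : M ∈ Q.orthogonal k.toSubmodule)
    (hC : C ∈ k) (hN : N ∈ Q.orthogonal k.toSubmodule)
    (hX : P (A + M) = t • A + M) (hY : P (C + N) = t • C + N) :
    Q (puttmannB P (A + M) (C + N)) (Pinv (puttmannB P (A + M) (C + N)))
        - Q (puttmannB P (A + M) (A + M)) (Pinv (puttmannB P (C + N) (C + N))) =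
      (1 - t) ^ 2 * (1 / 4 * Q (⁅A, N⁆ - ⁅C, M⁆) (⁅A, N⁆ - ⁅C, M⁆) - Q ⁅A, C⁆ ⁅M, N⁆) := by
  have hAN := lie_mem_orthogonal_of_mem hQ k hA hN
  have hCM := lie_mem_orthogonal_of_mem hQ k hC hM
  have hCN := lie_mem_orthogonal_of_mem hQ k hC hN
  rw [puttmannB_add_add_s1 hX hY, puttmannB_add_self hX, puttmannB_add_self hY,
    hPinv _ (Submodule.smul_mem _ _ (add_mem hAN hCM)), hPinv _ (Submodule.smul_mem _ _ hCN)]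
  simp only [map_add, map_sub, map_smul, LinearMap.add_apply, LinearMap.sub_apply,
    LinearMap.smul_apply, smul_eq_mul, hsymm.eq ⁅C, M⁆ ⁅A, N⁆, apply_lie_lie_eq_add hQ A M C N]
  ring

theorem lie_terms_eq (hrefl : Q.IsRefl) (hQ : Q.lieInvariant L)
    (hPk : ∀ X ∈ k, P X = t • X) (hPm : ∀ X ∈ Q.orthogonal k.toSubmodule, P X = X)
    (hA : A ∈ k) (hM : M ∈ Q.orthogonal k.toSubmodule)
    (hC : C ∈ k) (hN : N ∈ Q.orthogonal k.toSubmodule)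
    (hH : H ∈ k) (hV : V ∈ Q.orthogonal k.toSubmodule) (hMN : ⁅M, N⁆ = H + V) :
    (1 / 2) * Q (⁅P (A + M), C + N⁆ + ⁅A + M, P (C + N)⁆) ⁅A + M, C + N⁆
        - (3 / 4) * Q (P ⁅A + M, C + N⁆) ⁅A + M, C + N⁆ =
      Q (t • ⁅A, C⁆ + H) (⁅A, C⁆ + H) - 3 / 4 * t * Q (⁅A, C⁆ + H) (⁅A, C⁆ + H)
        + Q (((1 + t) / 2) • (⁅A, N⁆ - ⁅C, M⁆) + V) (⁅A, N⁆ - ⁅C, M⁆ + V)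
        - 3 / 4 * Q (⁅A, N⁆ - ⁅C, M⁆ + V) (⁅A, N⁆ - ⁅C, M⁆ + V) := by
  have hAC := k.lie_mem hA hC
  have hW : ⁅A, N⁆ - ⁅C, M⁆ ∈ Q.orthogonal k.toSubmodule :=
    sub_mem (lie_mem_orthogonal_of_mem hQ k hA hN) (lie_mem_orthogonal_of_mem hQ k hC hM)
  have hk : ⁅A, C⁆ + H ∈ k := k.add_mem hAC hH
  have hm := add_mem hW hV
  rw [map_add_eq_smul_add hPk hPm hA hM, map_add_eq_smul_add hPk hPm hC hN,
    lie_smul_add_add_lie_add_smul hMN, lie_add_add_eq hMN, map_add_eq_smul_add hPk hPm hk hm,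
    apply_add_add_of_mem_orthogonal hrefl (k.smul_mem t hk) hk hm hm,
    apply_add_add_of_mem_orthogonal hrefl
      (k.smul_mem 2 (k.add_mem (k.smul_mem t hAC) hH)) hk
      (add_mem (Submodule.smul_mem _ _ hW) (Submodule.smul_mem _ _ hV)) hm]
  simp only [map_add, map_smul, LinearMap.add_apply, LinearMap.smul_apply, smul_eq_mul]
  ring

theorem puttmannKappa_eq_sum_of_squares (hsymm : Q.IsSymm) (hQ : Q.lieInvariant L)
    (hPk : ∀ X ∈ k, P X = t • X) (hPm : ∀ X ∈ Q.orthogonal k.toSubmodule, P X = X)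
    (hPinv : ∀ X ∈ Q.orthogonal k.toSubmodule, Pinv X = X)
    (hA : A ∈ k) (hM : M ∈ Q.orthogonal k.toSubmodule)
    (hC : C ∈ k) (hN : N ∈ Q.orthogonal k.toSubmodule)
    (hH : H ∈ k) (hV : V ∈ Q.orthogonal k.toSubmodule) (hMN : ⁅M, N⁆ = H + V) :
    puttmannKappa Q P Pinv (A + M) (C + N) =
      t / 4 * Q (⁅A, C⁆ + (3 - 2 * t) • H) (⁅A, C⁆ + (3 - 2 * t) • H)
        + (1 - t) ^ 3 * Q H H
        + 1 / 4 * Q (t • (⁅A, N⁆ - ⁅C, M⁆) + V) (t • (⁅A, N⁆ - ⁅C, M⁆) + V) := by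
  have hACV : Q ⁅A, C⁆ V = 0 := hV _ (k.lie_mem hA hC)
  rw [puttmannKappa, lie_terms_eq hsymm.isRefl hQ hPk hPm hA hM hC hN hH hV hMN, add_sub_assoc,
    puttmannB_terms_eq hsymm hQ hPinv hA hM hC hN (map_add_eq_smul_add hPk hPm hA hM)
      (map_add_eq_smul_add hPk hPm hC hN), hMN]
  generalize ⁅A, N⁆ - ⁅C, M⁆ = W
  simp only [map_add, map_smul, LinearMap.add_apply, LinearMap.smul_apply, smul_eq_mul, hACV,
    hsymm.eq H ⁅A, C⁆, hsymm.eq V W]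
  ring

end Scaling

theorem leftInvariant_nonneg_curv_subalgebra_scaling_general
    {L : Type*} [LieRing L] [LieAlgebra ℝ L]
    {Q : LinearMap.BilinForm ℝ L} (hQ : Q.IsPosSemidef) (hQad : Q.lieInvariant L)
    {k : LieSubalgebra ℝ L} (hk : Codisjoint k.toSubmodule (Q.orthogonal k.toSubmodule))
    {t : ℝ} (ht0 : 0 ≤ t) (ht : t ≤ 1) {P Pinv : L →ₗ[ℝ] L}
    (hPk : ∀ X ∈ k, P X = t • X) (hPm : ∀ X ∈ Q.orthogonal k.toSubmodule, P X = X)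
    (hinv : Pinv.comp P = LinearMap.id) (X Y : L) :
    0 ≤ puttmannKappa Q P Pinv X Y := by
  have hPinv : ∀ Z ∈ Q.orthogonal k.toSubmodule, Pinv Z = Z := fun Z hZ => by
    simpa only [LinearMap.comp_apply, LinearMap.id_apply, hPm Z hZ] using LinearMap.congr_fun hinv Z
  obtain ⟨A, M, hA, hM, rfl⟩ := Submodule.codisjoint_iff_exists_add_eq.1 hk X
  obtain ⟨C, N, hC, hN, rfl⟩ := Submodule.codisjoint_iff_exists_add_eq.1 hk Y
  obtain ⟨H, V, hH, hV, hMN⟩ := Submodule.codisjoint_iff_exists_add_eq.1 hk ⁅M, N⁆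
  rw [puttmannKappa_eq_sum_of_squares hQ.isSymm hQad hPk hPm hPinv hA hM hC hN hH hV hMN.symm]
  have h1t : 0 ≤ 1 - t := sub_nonneg.2 ht
  have hnonneg := hQ.nonneg
  exact add_nonneg (add_nonneg (mul_nonneg (by positivity) (hnonneg _))
    (mul_nonneg (pow_nonneg h1t 3) (hnonneg _))) (mul_nonneg (by norm_num) (hnonneg _))

/-- **Eschenburg / Cheeger deformation (Lemma 4.2, first part).**  Let `𝔤` be a
finite-dimensional real Lie algebra with an ad-invariant inner product `Q`,
`𝔨 ⊆ 𝔤` any Lie subalgebra with `Q`-orthogonal complement `𝔪`, and `P_t = t·id`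
on `𝔨`, `id` on `𝔪`.  If `0 < t ≤ 1` then the left-invariant metric
`Q_t = tQ|𝔨 + Q|𝔪` has non-negative sectional curvature. -/
theorem leftInvariant_nonneg_curv_subalgebra_scaling
    {L : Type*} [LieRing L] [LieAlgebra ℝ L] [FiniteDimensional ℝ L]
    (Q : L →ₗ[ℝ] L →ₗ[ℝ] ℝ)
    (hQsymm : ∀ X Y : L, Q X Y = Q Y X)
    (hQpos : ∀ X : L, X ≠ 0 → 0 < Q X X)
    (hQad : ∀ X Y Z : L, Q ⁅Z, X⁆ Y + Q X ⁅Z, Y⁆ = 0)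
    (k : LieSubalgebra ℝ L) (m : Submodule ℝ L)
    (hm : ∀ Y : L, Y ∈ m ↔ ∀ X ∈ k, Q X Y = 0)
    (t : ℝ) (ht0 : 0 < t) (ht : t ≤ 1)
    (Pt PtInv : L →ₗ[ℝ] L)
    (hPtk : ∀ X ∈ k, Pt X = t • X)
    (hPtm : ∀ X ∈ m, Pt X = X)
    (hinv : PtInv.comp Pt = LinearMap.id) :
    ∀ X Y : L, 0 ≤ puttmannKappa Q Pt PtInv X Y := by
  have hQ := isPosSemidef_of_pos_s1 hQsymm hQpos
  obtain rfl : m = LinearMap.BilinForm.orthogonal Q k.toSubmodule := Submodule.ext hm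
  exact leftInvariant_nonneg_curv_subalgebra_scaling_general hQ
    (fun Z X Y => eq_neg_of_add_eq_zero_left (hQad X Y Z))
    (isCompl_orthogonal_of_pos hQ.isSymm.isRefl hQpos _).codisjoint ht0.le ht hPtk hPtm hinv
end

section
/- Let 𝔤 be a finite-dimensional real Lie algebra with an ad-invariant inner product Q, let 𝔨 ⊆ 𝔤 be a Lie subalgebra whose Q-orthogonal complement 𝔪 satisfies ⁅𝔪,𝔪⁆ ⊆ 𝔨 (the symmetric-pair condition), and for 0 < t < 1 let P_t be the linear automorphism of 𝔤 equal to t·id on 𝔨 and id on 𝔪. Then for X, Y ∈ 𝔤 the unnormalized sectional curvature κ_{P_t}(X,Y) given by Püttmann's formula vanishes if and only if ⁅X,Y⁆ = 0, ⁅X_𝔨,Y_𝔨⁆ = 0 and ⁅X_𝔪,Y_𝔪⁆ = 0, where X_𝔨, X_𝔪 denote the Q-orthogonal projections of X onto 𝔨 and 𝔪. -/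
/-!
Write `a = ⁅X_𝔨, Y_𝔨⁆`, `b = ⁅X_𝔪, Y_𝔪⁆`, `c = ⁅X_𝔨, Y_𝔪⁆` and `d = ⁅X_𝔪, Y_𝔨⁆`, so that
`⁅X, Y⁆ = (a + b) + (c + d)` with `a + b ∈ 𝔨` and `c + d ∈ 𝔪`. Both `B(X, Y)` and `B(X, X)` lie in
`𝔪`, where `P⁻¹` is the identity, and invariance together with the Jacobi identity turns the mixed
term `Q ⁅X_𝔨, X_𝔪⁆ ⁅Y_𝔨, Y_𝔪⁆` of Püttmann's formula into `Q a b - Q c d`. Completing the square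
then gives
`κ = t / 4 * |a + (3 - 2 * t) b| ^ 2 + (1 - t) ^ 3 * |b| ^ 2 + t ^ 2 / 4 * |c + d| ^ 2`,
whose coefficients are all positive when `0 < t < 1`.
-/

theorem lie_add_add {L : Type*} [LieRing L] (x y z w : L) :
    ⁅x + y, z + w⁆ = (⁅x, z⁆ + ⁅y, w⁆) + (⁅x, w⁆ + ⁅y, z⁆) := by
  simp only [add_lie, lie_add]
  abel

theorem lie_apply_add_lie_of_eigenvectors {R L : Type*} [CommRing R] [LieRing L] [LieAlgebra R L]
    {P : L →ₗ[R] L} {t : R} {Xk Xm Yk Ym : L} (hXk : P Xk = t • Xk) (hXm : P Xm = Xm)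
    (hYk : P Yk = t • Yk) (hYm : P Ym = Ym) :
    ⁅P (Xk + Xm), Yk + Ym⁆ + ⁅Xk + Xm, P (Yk + Ym)⁆ =
      (2 : R) • (t • ⁅Xk, Yk⁆ + ⁅Xm, Ym⁆) + (1 + t) • (⁅Xk, Ym⁆ + ⁅Xm, Yk⁆) := by
  simp only [map_add, hXk, hXm, hYk, hYm, add_lie, lie_add, smul_lie, lie_smul]
  module

section InvariantForm

variable {R L : Type*} [CommRing R] [LieRing L] [LieAlgebra R L] {Φ : LinearMap.BilinForm R L}

theorem apply_lie_apply_of_lieInvariant (hΦ : Φ.lieInvariant L) (x y z : L) :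
    Φ ⁅x, y⁆ z = Φ x ⁅y, z⁆ := by
  rw [← lie_skew, map_neg, LinearMap.neg_apply, hΦ, neg_neg]

theorem apply_lie_lie_jacobi_of_lieInvariant (hΦ : Φ.lieInvariant L) (x y z w : L) :
    Φ ⁅x, y⁆ ⁅z, w⁆ + Φ ⁅y, z⁆ ⁅x, w⁆ + Φ ⁅z, x⁆ ⁅y, w⁆ = 0 := by
  have jacobi : ⁅⁅x, y⁆, z⁆ + ⁅⁅y, z⁆, x⁆ + ⁅⁅z, x⁆, y⁆ = 0 := by
    rw [← lie_skew ⁅x, y⁆ z, ← lie_skew ⁅y, z⁆ x, ← lie_skew ⁅z, x⁆ y, ← neg_eq_zero,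
      ← lie_jacobi x y z]
    abel
  simp only [← apply_lie_apply_of_lieInvariant hΦ, ← LinearMap.add_apply, ← map_add, jacobi,
    map_zero, LinearMap.zero_apply]

theorem lie_mem_orthogonal_of_lieInvariant (hΦ : Φ.lieInvariant L) {k : LieSubalgebra R L}
    {x y : L} (hx : x ∈ k) (hy : y ∈ Φ.orthogonal k.toSubmodule) :
    ⁅x, y⁆ ∈ Φ.orthogonal k.toSubmodule :=
  (LieAlgebra.InvariantForm.orthogonal Φ (fun z : k ↦ hΦ z) k.toLieSubmodule).lie_mem
    (x := ⟨x, hx⟩) hy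

end InvariantForm

theorem apply_add_add_of_mem_orthogonal_s2 {R M : Type*} [CommRing R] [AddCommGroup M] [Module R M]
    {Φ : LinearMap.BilinForm R M} (hΦ : Φ.IsRefl) {N : Submodule R M} {a b c d : M}
    (ha : a ∈ N) (hb : b ∈ N) (hc : c ∈ Φ.orthogonal N) (hd : d ∈ Φ.orthogonal N) :
    Φ (a + c) (b + d) = Φ a b + Φ c d := by
  have had : Φ a d = 0 := hd a ha
  have hcb : Φ c b = 0 := hΦ b c (hc b hb)
  simp only [map_add, LinearMap.add_apply, had, hcb, add_zero, zero_add]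

theorem weighted_sum_three_eq_zero_iff_of_posDef {R M : Type*} [CommRing R] [LinearOrder R]
    [IsStrictOrderedRing R] [AddCommGroup M] [Module R M] {q : QuadraticForm R M} (hq : q.PosDef)
    {α β γ : R} (hα : 0 < α) (hβ : 0 < β) (hγ : 0 < γ) (x y z : M) :
    α * q x + β * q y + γ * q z = 0 ↔ x = 0 ∧ y = 0 ∧ z = 0 := by
  have hx := mul_nonneg hα.le (hq.nonneg x)
  have hy := mul_nonneg hβ.le (hq.nonneg y)
  have hz := mul_nonneg hγ.le (hq.nonneg z)
  rw [add_eq_zero_iff_of_nonneg (add_nonneg hx hy) hz, add_eq_zero_iff_of_nonneg hx hy]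
  simp only [mul_eq_zero, hα.ne', hβ.ne', hγ.ne', false_or, hq.anisotropic.eq_zero_iff, and_assoc]

section Puttmann

variable {L : Type*} [LieRing L] [LieAlgebra ℝ L]

section Eigenvectors

variable {P : L →ₗ[ℝ] L} {t : ℝ} {Xk Xm Yk Ym : L}

theorem puttmannB_of_eigenvectors (hXk : P Xk = t • Xk) (hXm : P Xm = Xm)
    (hYk : P Yk = t • Yk) (hYm : P Ym = Ym) :
    puttmannB P (Xk + Xm) (Yk + Ym) = ((1 - t) / 2) • (⁅Xk, Ym⁆ - ⁅Xm, Yk⁆) := by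
  simp only [puttmannB, map_add, hXk, hXm, hYk, hYm, add_lie, lie_add, smul_lie, lie_smul]
  module

theorem puttmannB_self_of_eigenvectors (hXk : P Xk = t • Xk) (hXm : P Xm = Xm) :
    puttmannB P (Xk + Xm) (Xk + Xm) = (1 - t) • ⁅Xk, Xm⁆ := by
  rw [puttmannB_of_eigenvectors hXk hXm hXk hXm, ← lie_skew Xm Xk]
  module

end Eigenvectors

variable {Q : LinearMap.BilinForm ℝ L} {k : LieSubalgebra ℝ L} {t : ℝ} {P Pinv : L →ₗ[ℝ] L}
  {Xk Xm Yk Ym : L}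

theorem puttmannKappa_of_symmetricPair (hQ : Q.IsRefl) (hQinv : Q.lieInvariant L)
    (hsym : ∀ X ∈ Q.orthogonal k.toSubmodule, ∀ Y ∈ Q.orthogonal k.toSubmodule, ⁅X, Y⁆ ∈ k)
    (hPk : ∀ X ∈ k, P X = t • X) (hPm : ∀ X ∈ Q.orthogonal k.toSubmodule, P X = X)
    (hPinv : ∀ X ∈ Q.orthogonal k.toSubmodule, Pinv X = X)
    (hXk : Xk ∈ k) (hXm : Xm ∈ Q.orthogonal k.toSubmodule)
    (hYk : Yk ∈ k) (hYm : Ym ∈ Q.orthogonal k.toSubmodule) :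
    puttmannKappa Q P Pinv (Xk + Xm) (Yk + Ym) =
      Q (t • ⁅Xk, Yk⁆ + ⁅Xm, Ym⁆) (⁅Xk, Yk⁆ + ⁅Xm, Ym⁆)
        - 3 * t / 4 * Q (⁅Xk, Yk⁆ + ⁅Xm, Ym⁆) (⁅Xk, Yk⁆ + ⁅Xm, Ym⁆)
        + (2 * t - 1) / 4 * Q (⁅Xk, Ym⁆ + ⁅Xm, Yk⁆) (⁅Xk, Ym⁆ + ⁅Xm, Yk⁆)
        + (1 - t) ^ 2 / 4 * Q (⁅Xk, Ym⁆ - ⁅Xm, Yk⁆) (⁅Xk, Ym⁆ - ⁅Xm, Yk⁆)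
        - (1 - t) ^ 2 * Q ⁅Xk, Xm⁆ ⁅Yk, Ym⁆ := by
  set m := Q.orthogonal k.toSubmodule
  have ha : ⁅Xk, Yk⁆ ∈ k := k.lie_mem hXk hYk
  have hb : ⁅Xm, Ym⁆ ∈ k := hsym Xm hXm Ym hYm
  have hc : ⁅Xk, Ym⁆ ∈ m := lie_mem_orthogonal_of_lieInvariant hQinv hXk hYm
  have hd : ⁅Xm, Yk⁆ ∈ m := by
    rw [← lie_skew]
    exact m.neg_mem (lie_mem_orthogonal_of_lieInvariant hQinv hYk hXm)
  have hy : ⁅Yk, Ym⁆ ∈ m := lie_mem_orthogonal_of_lieInvariant hQinv hYk hYm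
  have hab : ⁅Xk, Yk⁆ + ⁅Xm, Ym⁆ ∈ k := k.add_mem ha hb
  have hcd : ⁅Xk, Ym⁆ + ⁅Xm, Yk⁆ ∈ m := m.add_mem hc hd
  have hsplit_sum := apply_add_add_of_mem_orthogonal_s2 hQ
    (k.smul_mem 2 (k.add_mem (k.smul_mem t ha) hb)) hab (m.smul_mem (1 + t) hcd) hcd
  have hsplit_apply := apply_add_add_of_mem_orthogonal_s2 hQ (k.smul_mem t hab) hab hcd hcd
  rw [puttmannKappa, puttmannB_of_eigenvectors (hPk _ hXk) (hPm _ hXm) (hPk _ hYk) (hPm _ hYm),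
    puttmannB_self_of_eigenvectors (hPk _ hXk) (hPm _ hXm),
    puttmannB_self_of_eigenvectors (hPk _ hYk) (hPm _ hYm),
    hPinv _ (m.smul_mem _ (m.sub_mem hc hd)), hPinv _ (m.smul_mem _ hy),
    lie_apply_add_lie_of_eigenvectors (hPk _ hXk) (hPm _ hXm) (hPk _ hYk) (hPm _ hYm),
    lie_add_add, map_add P, hPk _ hab, hPm _ hcd, hsplit_sum, hsplit_apply]
  simp only [map_smul, LinearMap.smul_apply, smul_eq_mul]
  ring

theorem puttmannKappa_eq_sum_sq_of_symmetricPair (hQ : Q.IsSymm) (hQinv : Q.lieInvariant L)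
    (hsym : ∀ X ∈ Q.orthogonal k.toSubmodule, ∀ Y ∈ Q.orthogonal k.toSubmodule, ⁅X, Y⁆ ∈ k)
    (hPk : ∀ X ∈ k, P X = t • X) (hPm : ∀ X ∈ Q.orthogonal k.toSubmodule, P X = X)
    (hPinv : ∀ X ∈ Q.orthogonal k.toSubmodule, Pinv X = X)
    (hXk : Xk ∈ k) (hXm : Xm ∈ Q.orthogonal k.toSubmodule)
    (hYk : Yk ∈ k) (hYm : Ym ∈ Q.orthogonal k.toSubmodule) :
    puttmannKappa Q P Pinv (Xk + Xm) (Yk + Ym) =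
      t / 4 * Q.toQuadraticMap (⁅Xk, Yk⁆ + (3 - 2 * t) • ⁅Xm, Ym⁆)
        + (1 - t) ^ 3 * Q.toQuadraticMap ⁅Xm, Ym⁆
        + t ^ 2 / 4 * Q.toQuadraticMap (⁅Xk, Ym⁆ + ⁅Xm, Yk⁆) := by
  have hmixed : Q ⁅Xk, Xm⁆ ⁅Yk, Ym⁆ = Q ⁅Xk, Yk⁆ ⁅Xm, Ym⁆ - Q ⁅Xk, Ym⁆ ⁅Xm, Yk⁆ := by
    have hjacobi := apply_lie_lie_jacobi_of_lieInvariant hQinv Xk Xm Yk Ym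
    rw [← lie_skew Yk Xk, map_neg, LinearMap.neg_apply, hQ.eq ⁅Xm, Yk⁆] at hjacobi
    linear_combination hjacobi
  rw [puttmannKappa_of_symmetricPair hQ.isRefl hQinv hsym hPk hPm hPinv hXk hXm hYk hYm, hmixed]
  simp only [LinearMap.BilinMap.toQuadraticMap_apply, map_add, map_sub, map_smul,
    LinearMap.add_apply, LinearMap.sub_apply, LinearMap.smul_apply, smul_eq_mul,
    hQ.eq ⁅Xm, Ym⁆ ⁅Xk, Yk⁆, hQ.eq ⁅Xm, Yk⁆ ⁅Xk, Ym⁆]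
  ring

end Puttmann

theorem zero_curvature_plane_characterization_symmetric_pair_general
    {L : Type*} [LieRing L] [LieAlgebra ℝ L] {Q : LinearMap.BilinForm ℝ L}
    (hQsymm : Q.IsSymm) (hQpos : Q.toQuadraticMap.PosDef) (hQinv : Q.lieInvariant L)
    {k : LieSubalgebra ℝ L} {m : Submodule ℝ L} (hm : m = Q.orthogonal k.toSubmodule)
    (hsym : ∀ X ∈ m, ∀ Y ∈ m, ⁅X, Y⁆ ∈ k)
    {t : ℝ} (ht0 : 0 < t) (ht : t < 1) {P Pinv : L →ₗ[ℝ] L}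
    (hPk : ∀ X ∈ k, P X = t • X) (hPm : ∀ X ∈ m, P X = X) (hPinv : Pinv ∘ₗ P = LinearMap.id)
    {Xk Xm Yk Ym : L} (hXk : Xk ∈ k) (hXm : Xm ∈ m) (hYk : Yk ∈ k) (hYm : Ym ∈ m) :
    puttmannKappa Q P Pinv (Xk + Xm) (Yk + Ym) = 0 ↔
      ⁅Xk + Xm, Yk + Ym⁆ = 0 ∧ ⁅Xk, Yk⁆ = 0 ∧ ⁅Xm, Ym⁆ = 0 := by
  subst hm
  have hPinvm : ∀ X ∈ Q.orthogonal k.toSubmodule, Pinv X = X := fun X hX ↦ by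
    simpa only [LinearMap.comp_apply, LinearMap.id_apply, hPm X hX]
      using LinearMap.congr_fun hPinv X
  have ht3 : 0 < (1 - t) ^ 3 := pow_pos (sub_pos.2 ht) 3
  rw [puttmannKappa_eq_sum_sq_of_symmetricPair hQsymm hQinv hsym hPk hPm hPinvm hXk hXm hYk hYm,
    weighted_sum_three_eq_zero_iff_of_posDef hQpos (by positivity) ht3 (by positivity),
    lie_add_add]
  constructor
  · rintro ⟨hab, hb, hcd⟩
    have ha : ⁅Xk, Yk⁆ = 0 := by simpa only [hb, smul_zero, add_zero] using hab
    exact ⟨by simp only [ha, hb, hcd, add_zero], ha, hb⟩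
  · rintro ⟨hXY, ha, hb⟩
    exact ⟨by simp only [ha, hb, smul_zero, add_zero], hb,
      by simpa only [ha, hb, zero_add] using hXY⟩

/-- **Eschenburg (Lemma 4.2, second part).**  Let `𝔤` be a finite-dimensional real
Lie algebra with an ad-invariant inner product `Q`, `𝔨 ⊆ 𝔤` a subalgebra whose
`Q`-orthogonal complement `𝔪` satisfies `⁅𝔪,𝔪⁆ ⊆ 𝔨` (the symmetric-pair
condition), and for `0 < t < 1` let `P_t = t·id` on `𝔨`, `id` on `𝔪`.  Then
`κ_{P_t}(X,Y) = 0` if and only if `⁅X,Y⁆ = ⁅X_𝔨,Y_𝔨⁆ = ⁅X_𝔪,Y_𝔪⁆ = 0`, where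
`X = X_𝔨 + X_𝔪` is the `Q`-orthogonal decomposition. -/
theorem zero_curvature_plane_characterization_symmetric_pair
    {L : Type*} [LieRing L] [LieAlgebra ℝ L] [FiniteDimensional ℝ L]
    (Q : L →ₗ[ℝ] L →ₗ[ℝ] ℝ)
    (hQsymm : ∀ X Y : L, Q X Y = Q Y X)
    (hQpos : ∀ X : L, X ≠ 0 → 0 < Q X X)
    (hQad : ∀ X Y Z : L, Q ⁅Z, X⁆ Y + Q X ⁅Z, Y⁆ = 0)
    (k : LieSubalgebra ℝ L) (m : Submodule ℝ L)
    (hm : ∀ Y : L, Y ∈ m ↔ ∀ X ∈ k, Q X Y = 0)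
    (hsym : ∀ X ∈ m, ∀ Y ∈ m, ⁅X, Y⁆ ∈ k)
    (t : ℝ) (ht0 : 0 < t) (ht : t < 1)
    (Pt PtInv : L →ₗ[ℝ] L)
    (hPtk : ∀ X ∈ k, Pt X = t • X)
    (hPtm : ∀ X ∈ m, Pt X = X)
    (hinv : PtInv.comp Pt = LinearMap.id)
    (X Y Xk Xm Yk Ym : L)
    (hXk : Xk ∈ k) (hXm : Xm ∈ m) (hXdec : X = Xk + Xm)
    (hYk : Yk ∈ k) (hYm : Ym ∈ m) (hYdec : Y = Yk + Ym) :
    puttmannKappa Q Pt PtInv X Y = 0 ↔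
      (⁅X, Y⁆ = (0 : L) ∧ ⁅Xk, Yk⁆ = (0 : L) ∧ ⁅Xm, Ym⁆ = (0 : L)) := by
  rw [hXdec, hYdec]
  exact zero_curvature_plane_characterization_symmetric_pair_general ⟨hQsymm⟩ hQpos
    (fun Z X Y ↦ eq_neg_of_add_eq_zero_left (hQad X Y Z)) (Submodule.ext hm) hsym ht0 ht
    hPtk hPtm hinv hXk hXm hYk hYm
end

section
/- Let (V,Q) be a finite-dimensional real inner product space, P : V → V a Q-symmetric positive-definite automorphism, and t > 0. Equip V × V with the inner product ⟨(v₁,w₁),(v₂,w₂)⟩ = Q(Pv₁,v₂) + (1/t)·Q(w₁,w₂), and for X ∈ V set h(X) := (P⁻¹(P⁻¹ + t·id)⁻¹X, −t(P⁻¹ + t·id)⁻¹X) ∈ V × V. Then: (i) the difference of the two components of h(X) equals X; (ii) h(X) is orthogonal to every diagonal vector (Z,Z), Z ∈ V; and (iii) ⟨h(X),h(X)⟩ = Q((P⁻¹ + t·id)⁻¹X, X). Consequently the Cheeger-deformed metric is given by the symmetric endomorphism P_t = (P⁻¹ + t·id)⁻¹. -/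
open scoped RealInnerProductSpace

/-!
A functional on `V × V` that vanishes on the diagonal depends only on the difference of the
components. Since `h Y` and `(Y, 0)` both have difference `Y`, and `h X` is orthogonal to the
diagonal, the product of `h X` with `h Y` equals its product with `(Y, 0)`, which is
`Q(P(P⁻¹(S X)), Y) = Q(S X, Y)`.
-/

theorem map_eq_map_fst_sub_snd_zero {G H F : Type*} [AddGroup G] [AddZeroClass H]
    [FunLike F (G × G) H] [AddMonoidHomClass F (G × G) H] (f : F)
    (hf : ∀ z, f (z, z) = 0) (w : G × G) : f w = f (w.1 - w.2, 0) :=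
  calc
    f w = f ((w.1 - w.2, 0) + (w.2, w.2)) := by simp
    _ = f (w.1 - w.2, 0) := by rw [map_add, hf, add_zero]

section Cheeger

variable {K V : Type*} [Field K] [AddCommGroup V] [Module K V]

/-- The form `Q(P·,·) ⊕ (1/t)Q` on `V × V`, which models `T_pM × 𝔤` along an orbit, for an arbitrary
bilinear form `B` in place of the inner product `Q`. -/
def cheegerForm (B : LinearMap.BilinForm K V) (P : V →ₗ[K] V) (t : K) :
    LinearMap.BilinForm K (V × V) :=
  B.compl₁₂ (P ∘ₗ LinearMap.fst K V V) (LinearMap.fst K V V) +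
    t⁻¹ • B.compl₁₂ (LinearMap.snd K V V) (LinearMap.snd K V V)

/-- The lift `h` from the orbit directions to `V × V`. The maps `Pinv` and `S` stand for `P⁻¹` and
`(P⁻¹ + t·id)⁻¹`; they are arguments, so that the definition needs no invertibility. -/
def horizontalLift (Pinv S : V →ₗ[K] V) (t : K) : V →ₗ[K] V × V :=
  (Pinv ∘ₗ S).prod (-(t • S))

theorem cheegerForm_apply (B : LinearMap.BilinForm K V) (P : V →ₗ[K] V) (t : K) (v w : V × V) :
    cheegerForm B P t v w = B (P v.1) w.1 + t⁻¹ * B v.2 w.2 :=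
  rfl

theorem horizontalLift_apply (Pinv S : V →ₗ[K] V) (t : K) (X : V) :
    horizontalLift Pinv S t X = (Pinv (S X), -(t • S X)) :=
  rfl

theorem cheegerForm_diagonal (B : LinearMap.BilinForm K V) (P : V →ₗ[K] V) (t : K)
    (v : V × V) (Z : V) : cheegerForm B P t v (Z, Z) = B (P v.1 + t⁻¹ • v.2) Z := by
  simp only [cheegerForm_apply, map_add, map_smul, LinearMap.add_apply, LinearMap.smul_apply,
    smul_eq_mul]

theorem cheegerForm_horizontalLift_diagonal (B : LinearMap.BilinForm K V) {P Pinv : V →ₗ[K] V}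
    (hP : P ∘ₗ Pinv = LinearMap.id) (S : V →ₗ[K] V) {t : K} (ht : t ≠ 0) (X Z : V) :
    cheegerForm B P t (horizontalLift Pinv S t X) (Z, Z) = 0 := by
  have hPS : P (Pinv (S X)) = S X := LinearMap.congr_fun hP (S X)
  rw [cheegerForm_diagonal, horizontalLift_apply]
  calc
    B (P (Pinv (S X)) + t⁻¹ • -(t • S X)) Z = B (S X - S X) Z := by
      rw [hPS, smul_neg, inv_smul_smul₀ ht, sub_eq_add_neg]
    _ = 0 := by rw [sub_self, map_zero, LinearMap.zero_apply]

theorem horizontalLift_fst_sub_snd {Pinv S : V →ₗ[K] V} {t : K}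
    (hS : (Pinv + t • LinearMap.id) ∘ₗ S = LinearMap.id) (X : V) :
    (horizontalLift Pinv S t X).1 - (horizontalLift Pinv S t X).2 = X := by
  rw [horizontalLift_apply, sub_neg_eq_add]
  exact LinearMap.congr_fun hS X

theorem cheegerForm_horizontalLift_prodMk_zero (B : LinearMap.BilinForm K V)
    {P Pinv : V →ₗ[K] V} (hP : P ∘ₗ Pinv = LinearMap.id) (S : V →ₗ[K] V) (t : K) (X Y : V) :
    cheegerForm B P t (horizontalLift Pinv S t X) (Y, 0) = B (S X) Y := by
  have hPS : P (Pinv (S X)) = S X := LinearMap.congr_fun hP (S X)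
  rw [cheegerForm_apply, horizontalLift_apply, hPS, map_zero, mul_zero, add_zero]

theorem cheegerForm_horizontalLift_horizontalLift (B : LinearMap.BilinForm K V)
    {P Pinv S : V →ₗ[K] V} (hP : P ∘ₗ Pinv = LinearMap.id) {t : K} (ht : t ≠ 0)
    (hS : (Pinv + t • LinearMap.id) ∘ₗ S = LinearMap.id) (X Y : V) :
    cheegerForm B P t (horizontalLift Pinv S t X) (horizontalLift Pinv S t Y) = B (S X) Y := by
  rw [map_eq_map_fst_sub_snd_zero _ (cheegerForm_horizontalLift_diagonal B hP S ht X),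
    horizontalLift_fst_sub_snd hS, cheegerForm_horizontalLift_prodMk_zero B hP]

theorem cheeger_deformation_horizontal_lift_general (B : LinearMap.BilinForm K V)
    {P Pinv S : V →ₗ[K] V} (hP : P ∘ₗ Pinv = LinearMap.id) {t : K} (ht : t ≠ 0)
    (hS : (Pinv + t • LinearMap.id) ∘ₗ S = LinearMap.id) :
    (∀ X, (horizontalLift Pinv S t X).1 - (horizontalLift Pinv S t X).2 = X) ∧
      (∀ X Z, cheegerForm B P t (horizontalLift Pinv S t X) (Z, Z) = 0) ∧
      ∀ X Y, cheegerForm B P t (horizontalLift Pinv S t X) (horizontalLift Pinv S t Y) =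
        B (S X) Y :=
  ⟨horizontalLift_fst_sub_snd hS, cheegerForm_horizontalLift_diagonal B hP S ht,
    cheegerForm_horizontalLift_horizontalLift B hP ht hS⟩

end Cheeger

/-- **Cheeger deformation formula (equation (2) in Ziller's survey).**
Let `(V,Q)` be a finite-dimensional real inner product space, `P` a `Q`-symmetric
positive-definite automorphism with inverse `Pinv`, `t > 0`, and let
`S = (P⁻¹ + t·id)⁻¹`.  Equip `V × V` with the inner product
`⟨(v₁,w₁),(v₂,w₂)⟩ = Q(Pv₁,v₂) + (1/t)Q(w₁,w₂)` and set
`h(X) = (P⁻¹(P⁻¹+t·id)⁻¹X, −t(P⁻¹+t·id)⁻¹X)`.  Then: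
(i) the difference of the two components of `h(X)` is `X`;
(ii) `h(X)` is orthogonal to every diagonal vector `(Z,Z)`;
(iii) `⟨h(X),h(X)⟩ = Q((P⁻¹+t·id)⁻¹X, X)`.
Consequently the Cheeger-deformed metric is given by `P_t = (P⁻¹ + t·id)⁻¹`. -/
theorem cheeger_deformation_horizontal_lift
    {V : Type*} [NormedAddCommGroup V] [InnerProductSpace ℝ V]
    [FiniteDimensional ℝ V]
    (P Pinv S : V →ₗ[ℝ] V)
    (hPsymm : ∀ x y : V, ⟪P x, y⟫ = ⟪x, P y⟫)
    (hPpos : ∀ x : V, x ≠ 0 → 0 < ⟪P x, x⟫)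
    (hPinv₁ : Pinv.comp P = LinearMap.id)
    (hPinv₂ : P.comp Pinv = LinearMap.id)
    (t : ℝ) (ht : 0 < t)
    (hS₁ : S.comp (Pinv + t • LinearMap.id) = LinearMap.id)
    (hS₂ : (Pinv + t • LinearMap.id).comp S = LinearMap.id)
    (ip : V × V → V × V → ℝ)
    (hip : ∀ v w : V × V, ip v w = ⟪P v.1, w.1⟫ + (1 / t) * ⟪v.2, w.2⟫)
    (h : V → V × V)
    (hh : ∀ X : V, h X = (Pinv (S X), -(t • S X))) :
    (∀ X : V, (h X).1 - (h X).2 = X)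
    ∧ (∀ X Z : V, ip (h X) (Z, Z) = 0)
    ∧ (∀ X : V, ip (h X) (h X) = ⟪S X, X⟫) := by
  have ip_eq (v w : V × V) : ip v w = cheegerForm (innerₗ V) P t v w := by
    rw [hip, one_div, cheegerForm_apply, innerₗ_apply_apply, innerₗ_apply_apply]
  obtain rfl : h = horizontalLift Pinv S t := funext hh
  simp only [ip_eq]
  exact (cheeger_deformation_horizontal_lift_general (innerₗ V) hPinv₂ ht.ne' hS₂).imp_right
    (And.imp_right fun metric X => metric X X)
end

section
/- Identify 𝔰𝔲(3) with the traceless skew-Hermitian 3×3 complex matrices, with inner product Q(X,Y) = Re tr(XY*). Let 𝔨 = {blockdiag(A, −tr A) : A a 2×2 skew-Hermitian matrix} and let 𝔪 be its Q-orthogonal complement, consisting of the matrices Y_v = [[0₂ₓ₂, v],[−v*, 0]] with v ∈ ℂ². Suppose X, Y ∈ 𝔰𝔲(3) span a 2-dimensional real subspace and satisfy ⁅X,Y⁆ = 0, ⁅X_𝔨,Y_𝔨⁆ = 0, and ⁅X_𝔪,Y_𝔪⁆ = 0 (orthogonal projections). Then span{X,Y} contains either the matrix diag(i,i,−2i), or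 a matrix of the form k·diag(−2i,i,i)·k⁻¹ for some k ∈ SU(3) of the block form blockdiag(B, (det B)⁻¹) with B ∈ U(2). -/
open Matrix Complex

/-- The embedding `A ↦ blockdiag(A, c)` of a `2×2` complex matrix together with a
scalar `c` into `3×3` complex matrices. -/
def blockDiag2 (A : Matrix (Fin 2) (Fin 2) ℂ) (c : ℂ) : Matrix (Fin 3) (Fin 3) ℂ :=
  Matrix.of fun i j =>
    if hi : (i : ℕ) < 2 then
      if hj : (j : ℕ) < 2 then A ⟨i, hi⟩ ⟨j, hj⟩ else 0
    else if (j : ℕ) < 2 then 0 else c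

/-- The matrix `Y_v = [[0₂ₓ₂, v],[−v*, 0]] ∈ 𝔰𝔲(3)` attached to a vector `v ∈ ℂ²`. -/
def offBlock (v : Fin 2 → ℂ) : Matrix (Fin 3) (Fin 3) ℂ :=
  Matrix.of fun i j =>
    if hi : (i : ℕ) < 2 then
      if (j : ℕ) < 2 then 0 else v ⟨i, hi⟩
    else if hj : (j : ℕ) < 2 then -(starRingEnd ℂ) (v ⟨j, hj⟩) else 0

/-!
Since `[Y_v, Y_w] = 0` forces `v` and `w` to be linearly dependent over `ℝ`, the plane meets `𝔨` in
some `Z = blockdiag(E, -tr E) ≠ 0`. If the plane is not contained in `𝔨`, then `Z` commutes with an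
element whose `𝔪`-component `Y_u` is nonzero, which says `E u = -(tr E) u`. If it is contained in
`𝔨`, then the upper blocks have a common eigenvector `u`, and the real-linear functional sending
`E` to its eigenvalue on `u` plus `tr E` takes imaginary values, so it vanishes at some nonzero `Z`
in the plane: again `E u = -(tr E) u`. The eigenvalues of `E` are therefore `2 tr E` and `-tr E`,
and a real multiple of `Z` is conjugate to `diag(-2i, i, i)` by an element of `K`. So the second
alternative of the conclusion always occurs.
-/

section Eigenvectors

lemma exists_common_eigenvector_of_commute {K V : Type*} [Field K] [IsAlgClosed K]
    [AddCommGroup V] [Module K V] [FiniteDimensional K V] [Nontrivial V]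
    {f g : Module.End K V} (hfg : Commute f g) :
    ∃ u ≠ 0, ∃ α γ : K, f u = α • u ∧ g u = γ • u := by
  obtain ⟨α, hα⟩ := Module.End.exists_eigenvalue f
  have hmaps : Set.MapsTo g (f.eigenspace α) (f.eigenspace α) :=
    Module.End.mapsTo_genEigenspace_of_comm hfg α 1
  have : Nontrivial (f.eigenspace α) := Submodule.nontrivial_iff_ne_bot.mpr hα
  obtain ⟨γ, hγ⟩ := Module.End.exists_eigenvalue (g.restrict hmaps)
  obtain ⟨u, hu⟩ := hγ.exists_hasEigenvector
  exact ⟨u, by simpa using hu.2, α, γ, Module.End.mem_eigenspace_iff.mp u.2,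
    congrArg Subtype.val hu.apply_eq_smul⟩

variable {𝕜 n : Type*} [RCLike 𝕜]

lemma not_linearIndependent_of_vecMulVec_star_comm {v w : n → 𝕜}
    (h : vecMulVec v (star w) = vecMulVec w (star v)) : ¬ LinearIndependent ℝ ![v, w] := by
  intro hvw
  have hentry (i j : n) : v i * star (w j) = w i * star (v j) := congrFun₂ h i j
  obtain ⟨j, hj⟩ := Function.ne_iff.mp (hvw.ne_zero 0)
  -- `v j * star (w j)` is real, and multiplying `w` by `v j * star (v j)` turns it into a multiple
  -- of `v`.
  have hreal : (RCLike.re (v j * star (w j)) : 𝕜) = v j * star (w j) := by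
    refine RCLike.conj_eq_iff_re.mp ?_
    simpa [mul_comm] using (hentry j j).symm
  have hnormSq : (RCLike.normSq (v j) : 𝕜) = v j * star (v j) :=
    (RCLike.normSq_eq_def' (v j)).symm ▸ by simp [RCLike.mul_conj]
  have hcomb : RCLike.re (v j * star (w j)) • v + (-RCLike.normSq (v j)) • w = 0 := by
    ext i
    simp only [Pi.add_apply, Pi.smul_apply, Pi.zero_apply, RCLike.real_smul_eq_coe_mul, hreal,
      RCLike.ofReal_neg, hnormSq]
    linear_combination v j * hentry i j
  have hnorm := (LinearIndependent.pair_iff.mp hvw _ _ hcomb).2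
  exact hj (by simpa using hnorm)

open scoped ComplexOrder in
lemma star_eigenvalue_of_conjTranspose_eq_neg [Fintype n] {A : Matrix n n 𝕜} {u : n → 𝕜} {μ : 𝕜}
    (hA : Aᴴ = -A) (hu : u ≠ 0) (hAu : A *ᵥ u = μ • u) : star μ = -μ := by
  have hnorm : star u ⬝ᵥ u ≠ 0 := mt dotProduct_star_self_eq_zero.mp hu
  refine mul_right_cancel₀ hnorm ?_
  calc star μ * (star u ⬝ᵥ u) = star (A *ᵥ u) ⬝ᵥ u := by
        rw [hAu, star_smul, smul_dotProduct, smul_eq_mul]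
    _ = star u ⬝ᵥ (-A) *ᵥ u := by rw [star_mulVec, ← dotProduct_mulVec, hA]
    _ = -μ * (star u ⬝ᵥ u) := by
        rw [neg_mulVec, hAu, dotProduct_neg, dotProduct_smul, smul_eq_mul, neg_mul]

end Eigenvectors

section SkewHermitian

lemma re_eq_zero_of_star_eq_neg {z : ℂ} (hz : star z = -z) : z.re = 0 :=
  self_eq_neg.mp (by simpa using congrArg re hz)

lemma exists_real_smul_eq_of_re_eq_zero {z w : ℂ} (hz : z.re = 0) (hz0 : z ≠ 0) (hw : w.re = 0) :
    ∃ s : ℝ, s • z = w := by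
  have him : z.im ≠ 0 := fun him => hz0 (Complex.ext hz him)
  exact ⟨w.im / z.im, Complex.ext (by simp [hz, hw]) (by simp [him])⟩

variable {R n : Type*} [AddCommGroup R] [StarAddMonoid R] {A C : Matrix n n R}

lemma star_trace_of_conjTranspose_eq_neg [Fintype n] (hA : Aᴴ = -A) :
    star A.trace = -A.trace := by
  rw [← trace_conjTranspose, hA, trace_neg]

lemma conjTranspose_smul_add_smul_eq_neg [Module ℝ R] [StarModule ℝ R] (hA : Aᴴ = -A)
    (hC : Cᴴ = -C) (a b : ℝ) : (a • A + b • C)ᴴ = -(a • A + b • C) := by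
  simp [conjTranspose_add, conjTranspose_smul, hA, hC, add_comm]

lemma exists_smul_add_smul_mulVec_eq_neg_trace_smul [Fintype n] [Nonempty n] {A C : Matrix n n ℂ}
    (hA : Aᴴ = -A) (hC : Cᴴ = -C) (hAC : Commute A C) :
    ∃ a b : ℝ, ¬ (a = 0 ∧ b = 0) ∧ ∃ u ≠ 0,
      (a • A + b • C) *ᵥ u = -(a • A + b • C).trace • u := by
  classical
  obtain ⟨u, hu, α, γ, hAu, hCu⟩ :=
    exists_common_eigenvector_of_commute (hAC.map (toLinAlgEquiv' (R := ℂ) (n := n)))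
  rw [toLinAlgEquiv'_apply] at hAu hCu
  have hdep : ¬ LinearIndependent ℝ ![(α + A.trace).im, (γ + C.trace).im] := fun h => by
    simpa using h.fintype_card_le_finrank
  obtain ⟨a, b, hab, hne⟩ : ∃ a b : ℝ,
      a • (α + A.trace).im + b • (γ + C.trace).im = 0 ∧ ¬ (a = 0 ∧ b = 0) := by
    simpa only [LinearIndependent.pair_iff, not_forall, exists_prop] using hdep
  refine ⟨a, b, hne, u, hu, ?_⟩
  have hEu : (a • A + b • C) *ᵥ u = (a • α + b • γ) • u := by
    simp only [add_mulVec, smul_mulVec, hAu, hCu, add_smul, smul_assoc]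
  have hE := conjTranspose_smul_add_smul_eq_neg hA hC a b
  have hre : ((a • α + b • γ) + (a • A + b • C).trace).re = 0 := by
    rw [add_re, re_eq_zero_of_star_eq_neg (star_eigenvalue_of_conjTranspose_eq_neg hE hu hEu),
      re_eq_zero_of_star_eq_neg (star_trace_of_conjTranspose_eq_neg hE), add_zero]
  have him : ((a • α + b • γ) + (a • A + b • C).trace).im = 0 := by
    rw [← hab]
    simp only [trace_add, trace_smul, add_im, smul_im, smul_eq_mul]
    ring
  rw [hEu, eq_neg_of_add_eq_zero_left (Complex.ext hre him)]

end SkewHermitian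

section Diagonalization

open scoped ComplexConjugate

lemma exists_smul_dotProduct_star_eq_one {𝕜 n : Type*} [RCLike 𝕜] [Fintype n] {u : n → 𝕜}
    (hu : u ≠ 0) : ∃ r : 𝕜, (r • u) ⬝ᵥ star (r • u) = 1 := by
  have hnorm := norm_smul_inv_norm (𝕜 := 𝕜) (x := WithLp.toLp 2 u) (by simpa using hu)
  refine ⟨(‖WithLp.toLp 2 u‖⁻¹ : 𝕜), ?_⟩
  have hinner := inner_self_eq_norm_sq_to_K (𝕜 := 𝕜) ((‖WithLp.toLp 2 u‖⁻¹ : 𝕜) • WithLp.toLp 2 u)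
  rwa [hnorm, RCLike.ofReal_one, one_pow, EuclideanSpace.inner_eq_star_dotProduct] at hinner

/-- A matrix with second column `u`, unitary when `u` is a unit vector. It diagonalizes the
skew-Hermitian matrices that have `u` as an eigenvector. -/
def unitaryOfUnitVector (u : Fin 2 → ℂ) : Matrix (Fin 2) (Fin 2) ℂ :=
  !![conj (u 1), u 0; -conj (u 0), u 1]

lemma unitaryOfUnitVector_mul_conjTranspose {u : Fin 2 → ℂ} (hu : u ⬝ᵥ star u = 1) :
    unitaryOfUnitVector u * (unitaryOfUnitVector u)ᴴ = 1 := by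
  simp only [dotProduct, Fin.sum_univ_two, Pi.star_apply, RCLike.star_def] at hu
  ext i j
  fin_cases i <;> fin_cases j <;> simp [unitaryOfUnitVector, mul_apply]
  · linear_combination hu
  · ring
  · ring
  · linear_combination hu

lemma mul_unitaryOfUnitVector {A : Matrix (Fin 2) (Fin 2) ℂ} {u : Fin 2 → ℂ} {μ : ℂ}
    (hA : Aᴴ = -A) (hμ : conj μ = -μ) (hAu : A *ᵥ u = μ • u) :
    A * unitaryOfUnitVector u = unitaryOfUnitVector u * diagonal ![A.trace - μ, μ] := by
  have hentry (i j : Fin 2) : conj (A j i) = -A i j := congrFun₂ hA i j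
  have hrow (i : Fin 2) : A i 0 * u 0 + A i 1 * u 1 = μ * u i := by
    simpa [mulVec, dotProduct] using congrFun hAu i
  have hcol (i : Fin 2) : A 0 i * conj (u 0) + A 1 i * conj (u 1) = μ * conj (u i) := by
    have hconj := congrArg conj (hrow i)
    rw [map_add, map_mul, map_mul, map_mul, hentry, hentry, hμ] at hconj
    linear_combination -hconj
  ext i j
  fin_cases i <;> fin_cases j <;>
    simp [unitaryOfUnitVector, mul_apply, trace_fin_two]
  · linear_combination -hcol 1
  · linear_combination hrow 0
  · linear_combination hcol 0
  · linear_combination hrow 1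

lemma exists_unitary_diagonalization {A : Matrix (Fin 2) (Fin 2) ℂ} {u : Fin 2 → ℂ} {μ : ℂ}
    (hA : Aᴴ = -A) (hu : u ≠ 0) (hAu : A *ᵥ u = μ • u) :
    ∃ B : Matrix (Fin 2) (Fin 2) ℂ, B * Bᴴ = 1 ∧ A = B * diagonal ![A.trace - μ, μ] * Bᴴ := by
  have hμ := star_eigenvalue_of_conjTranspose_eq_neg hA hu hAu
  obtain ⟨r, hr⟩ := exists_smul_dotProduct_star_eq_one hu
  have hunitary := unitaryOfUnitVector_mul_conjTranspose hr
  refine ⟨unitaryOfUnitVector (r • u), hunitary, ?_⟩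
  have hAru : A *ᵥ (r • u) = μ • r • u := by rw [mulVec_smul, hAu, smul_comm]
  rw [← mul_unitaryOfUnitVector hA hμ hAru, mul_assoc, hunitary, mul_one]

end Diagonalization

section Blocks

variable {A A' B : Matrix (Fin 2) (Fin 2) ℂ} {c c' : ℂ} {v w : Fin 2 → ℂ}

lemma blockDiag2_inj : blockDiag2 A c = blockDiag2 A' c' ↔ A = A' ∧ c = c' := by
  refine ⟨fun h => ⟨?_, congrFun₂ h 2 2⟩, fun h => by rw [h.1, h.2]⟩
  ext i j
  simpa [blockDiag2, i.is_le, j.is_le] using congrFun₂ h i.castSucc j.castSucc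

lemma blockDiag2_zero : blockDiag2 0 0 = 0 := by
  ext i j
  simp [blockDiag2]

lemma blockDiag2_one : blockDiag2 1 1 = 1 := by
  ext i j
  fin_cases i <;> fin_cases j <;> simp [blockDiag2]

lemma blockDiag2_add (A A' : Matrix (Fin 2) (Fin 2) ℂ) (c c' : ℂ) :
    blockDiag2 (A + A') (c + c') = blockDiag2 A c + blockDiag2 A' c' := by
  ext i j
  fin_cases i <;> fin_cases j <;> simp [blockDiag2]

lemma blockDiag2_smul (s : ℝ) (A : Matrix (Fin 2) (Fin 2) ℂ) (c : ℂ) :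
    blockDiag2 (s • A) (s • c) = s • blockDiag2 A c := by
  ext i j
  fin_cases i <;> fin_cases j <;> simp [blockDiag2]

lemma blockDiag2_mul (A A' : Matrix (Fin 2) (Fin 2) ℂ) (c c' : ℂ) :
    blockDiag2 A c * blockDiag2 A' c' = blockDiag2 (A * A') (c * c') := by
  ext i j
  fin_cases i <;> fin_cases j <;>
    simp [blockDiag2, mul_apply, Fin.sum_univ_two, Fin.sum_univ_three]

lemma blockDiag2_diagonal (d₀ d₁ d₂ : ℂ) :
    blockDiag2 (diagonal ![d₀, d₁]) d₂ = diagonal ![d₀, d₁, d₂] := by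
  ext i j
  fin_cases i <;> fin_cases j <;> simp [blockDiag2]

lemma offBlock_zero : offBlock 0 = 0 := by
  ext i j
  simp [offBlock]

lemma offBlock_add (v w : Fin 2 → ℂ) : offBlock (v + w) = offBlock v + offBlock w := by
  ext i j
  fin_cases i <;> fin_cases j <;> simp [offBlock, add_comm]

lemma offBlock_smul (s : ℝ) (v : Fin 2 → ℂ) : offBlock (s • v) = s • offBlock v := by
  ext i j
  fin_cases i <;> fin_cases j <;> simp [offBlock]

lemma offBlock_mul (v w : Fin 2 → ℂ) :
    offBlock v * offBlock w = blockDiag2 (-vecMulVec v (star w)) (-(star v ⬝ᵥ w)) := by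
  ext i j
  fin_cases i <;> fin_cases j <;>
    simp [offBlock, blockDiag2, mul_apply, vecMulVec, dotProduct, Fin.sum_univ_three, add_comm]

lemma vecMulVec_star_comm_of_commute_offBlock (h : Commute (offBlock v) (offBlock w)) :
    vecMulVec v (star w) = vecMulVec w (star v) := by
  have hmul := h.eq
  rw [offBlock_mul, offBlock_mul, blockDiag2_inj] at hmul
  exact neg_injective hmul.1

lemma commute_of_commute_blockDiag2 (h : Commute (blockDiag2 A c) (blockDiag2 A' c')) :
    Commute A A' := by
  have hmul := h.eq
  rw [blockDiag2_mul, blockDiag2_mul, blockDiag2_inj] at hmul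
  exact hmul.1

lemma mulVec_eq_smul_of_commute_add_offBlock
    (h : Commute (blockDiag2 A c) (blockDiag2 A' c' + offBlock v)) : A *ᵥ v = c • v := by
  ext i
  have hentry := congrFun₂ h.eq i.castSucc 2
  fin_cases i <;>
    simpa [blockDiag2, offBlock, mul_apply, mulVec, dotProduct, Fin.sum_univ_three,
      mul_comm c] using hentry

lemma blockDiag2_conj_diagonal (hB : B * Bᴴ = 1) (d₀ d₁ d₂ : ℂ) :
    blockDiag2 B B.det⁻¹ * diagonal ![d₀, d₁, d₂] * (blockDiag2 B B.det⁻¹)⁻¹ =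
      blockDiag2 (B * diagonal ![d₀, d₁] * Bᴴ) d₂ := by
  have hdet : B.det ≠ 0 := (isUnit_det_of_right_inverse hB).ne_zero
  have hinv : (blockDiag2 B B.det⁻¹)⁻¹ = blockDiag2 Bᴴ B.det :=
    inv_eq_right_inv (by rw [blockDiag2_mul, hB, inv_mul_cancel₀ hdet, blockDiag2_one])
  rw [hinv, ← blockDiag2_diagonal, blockDiag2_mul, blockDiag2_mul, mul_right_comm,
    inv_mul_cancel₀ hdet, one_mul]

lemma exists_smul_blockDiag2_eq_conj {E : Matrix (Fin 2) (Fin 2) ℂ} {u : Fin 2 → ℂ}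
    (hE : Eᴴ = -E) (hE0 : E ≠ 0) (hu : u ≠ 0) (hEu : E *ᵥ u = -E.trace • u) :
    ∃ (s : ℝ) (B : Matrix (Fin 2) (Fin 2) ℂ), B * Bᴴ = 1 ∧
      s • blockDiag2 E (-E.trace) =
        blockDiag2 B B.det⁻¹ * diagonal ![-2 * I, I, I] * (blockDiag2 B B.det⁻¹)⁻¹ := by
  obtain ⟨B, hB, hdiag⟩ := exists_unitary_diagonalization hE hu hEu
  rw [sub_neg_eq_add] at hdiag
  have htrace : -E.trace ≠ 0 := by
    intro h
    have hzero : (![0, 0] : Fin 2 → ℂ) = 0 := by simp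
    rw [h, neg_eq_zero.mp h, add_zero, hzero, diagonal_zero', mul_zero, zero_mul] at hdiag
    exact hE0 hdiag
  have hre : (-E.trace).re = 0 := by
    rw [neg_re, re_eq_zero_of_star_eq_neg (star_trace_of_conjTranspose_eq_neg hE), neg_zero]
  obtain ⟨s, hs⟩ := exists_real_smul_eq_of_re_eq_zero hre htrace I_re
  have htwice : s • (E.trace + E.trace) = -2 * I := by
    rw [← hs]
    simp only [real_smul]
    ring
  have hscaled : s • diagonal ![E.trace + E.trace, -E.trace] = diagonal ![-2 * I, I] := by
    rw [← diagonal_smul, smul_cons, smul_cons, hs, htwice, smul_empty]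
  refine ⟨s, B, hB, ?_⟩
  rw [blockDiag2_conj_diagonal hB, ← blockDiag2_smul, hs, ← hscaled, Matrix.mul_smul,
    Matrix.smul_mul, ← hdiag]

end Blocks

section Planes

variable {A C : Matrix (Fin 2) (Fin 2) ℂ} {v w : Fin 2 → ℂ} {a b : ℝ}

lemma smul_add_smul_eq_blockDiag2 (h : a • v + b • w = 0) :
    a • (blockDiag2 A (-A.trace) + offBlock v) + b • (blockDiag2 C (-C.trace) + offBlock w) =
      blockDiag2 (a • A + b • C) (-(a • A + b • C).trace) := by
  have hoff : a • offBlock v + b • offBlock w = 0 := by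
    rw [← offBlock_smul, ← offBlock_smul, ← offBlock_add, h, offBlock_zero]
  have htrace : -(a • A + b • C).trace = a • -A.trace + b • -C.trace := by
    rw [trace_add, trace_smul, trace_smul, neg_add, smul_neg, smul_neg]
  rw [htrace, blockDiag2_add, blockDiag2_smul, blockDiag2_smul, smul_add, smul_add,
    add_add_add_comm, hoff, add_zero]

lemma exists_smul_add_smul_eq_zero_and_mulVec_eq (hA : Aᴴ = -A) (hC : Cᴴ = -C)
    (hcomm : Commute (blockDiag2 A (-A.trace) + offBlock v) (blockDiag2 C (-C.trace) + offBlock w))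
    (hm : Commute (offBlock v) (offBlock w)) :
    ∃ a b : ℝ, ¬ (a = 0 ∧ b = 0) ∧ a • v + b • w = 0 ∧
      ∃ u ≠ 0, (a • A + b • C) *ᵥ u = -(a • A + b • C).trace • u := by
  by_cases hvw : v = 0 ∧ w = 0
  · obtain ⟨rfl, rfl⟩ := hvw
    rw [offBlock_zero, add_zero, add_zero] at hcomm
    obtain ⟨a, b, hab, hEu⟩ :=
      exists_smul_add_smul_mulVec_eq_neg_trace_smul hA hC (commute_of_commute_blockDiag2 hcomm)
    exact ⟨a, b, hab, by simp, hEu⟩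
  · have hdep := not_linearIndependent_of_vecMulVec_star_comm
      (vecMulVec_star_comm_of_commute_offBlock hm)
    obtain ⟨a, b, hzero, hab⟩ : ∃ a b : ℝ, a • v + b • w = 0 ∧ ¬ (a = 0 ∧ b = 0) := by
      simpa only [LinearIndependent.pair_iff, not_forall, exists_prop] using hdep
    have hX := ((Commute.refl _).smul_left a).add_left (hcomm.symm.smul_left b)
    have hY := (hcomm.smul_left a).add_left ((Commute.refl _).smul_left b)
    rw [smul_add_smul_eq_blockDiag2 hzero] at hX hY
    refine ⟨a, b, hab, hzero, ?_⟩
    rcases not_and_or.mp hvw with hv | hw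
    · exact ⟨v, hv, mulVec_eq_smul_of_commute_add_offBlock hX⟩
    · exact ⟨w, hw, mulVec_eq_smul_of_commute_add_offBlock hY⟩

theorem zero_curvature_plane_su3_general (hA : Aᴴ = -A) (hC : Cᴴ = -C)
    (hind : LinearIndependent ℝ
      ![blockDiag2 A (-A.trace) + offBlock v, blockDiag2 C (-C.trace) + offBlock w])
    (hcomm : Commute (blockDiag2 A (-A.trace) + offBlock v) (blockDiag2 C (-C.trace) + offBlock w))
    (hm : Commute (offBlock v) (offBlock w)) :
    ∃ M ∈ Submodule.span ℝ
        {blockDiag2 A (-A.trace) + offBlock v, blockDiag2 C (-C.trace) + offBlock w},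
      ∃ B : Matrix (Fin 2) (Fin 2) ℂ, B * Bᴴ = 1 ∧
        M = blockDiag2 B B.det⁻¹ * diagonal ![-2 * I, I, I] * (blockDiag2 B B.det⁻¹)⁻¹ := by
  obtain ⟨a, b, hab, hzero, u, hu, hEu⟩ :=
    exists_smul_add_smul_eq_zero_and_mulVec_eq hA hC hcomm hm
  have hZ := smul_add_smul_eq_blockDiag2 (A := A) (C := C) hzero
  have hE0 : a • A + b • C ≠ 0 := fun hE0 => hab <| LinearIndependent.pair_iff.mp hind a b <| by
    rw [hZ, hE0, trace_zero, neg_zero, blockDiag2_zero]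
  obtain ⟨s, B, hB, hconj⟩ :=
    exists_smul_blockDiag2_eq_conj (conjTranspose_smul_add_smul_eq_neg hA hC a b) hE0 hu hEu
  refine ⟨_, Submodule.smul_mem _ s (Submodule.mem_span_pair.mpr ⟨a, b, rfl⟩), B, hB, ?_⟩
  rw [hZ, hconj]

end Planes

/-- **Ziller, Lemma 4.4.**  In `𝔰𝔲(3)` with `Q(X,Y) = Re tr(XY*)`, with
`𝔨 = {blockdiag(A, −tr A)}` (the Lie algebra of `U(2) ⊂ SU(3)`) and `𝔪` its
`Q`-orthogonal complement consisting of the `Y_v`, suppose `X, Y` span a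
2-plane and satisfy `⁅X,Y⁆ = ⁅X_𝔨,Y_𝔨⁆ = ⁅X_𝔪,Y_𝔪⁆ = 0`.  Then the span of
`X, Y` contains either `diag(i,i,−2i)` or a conjugate `k·diag(−2i,i,i)·k⁻¹`
with `k = blockdiag(B, (det B)⁻¹)`, `B ∈ U(2)`. -/
theorem zero_curvature_plane_su3
    (X Y Xk Xm Yk Ym : Matrix (Fin 3) (Fin 3) ℂ)
    (hX : Xᴴ = -X) (hXtr : X.trace = 0)
    (hY : Yᴴ = -Y) (hYtr : Y.trace = 0)
    (hind : LinearIndependent ℝ ![X, Y])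
    (hXk : ∃ A : Matrix (Fin 2) (Fin 2) ℂ, Aᴴ = -A ∧ Xk = blockDiag2 A (-A.trace))
    (hXm : ∃ v : Fin 2 → ℂ, Xm = offBlock v)
    (hYk : ∃ A : Matrix (Fin 2) (Fin 2) ℂ, Aᴴ = -A ∧ Yk = blockDiag2 A (-A.trace))
    (hYm : ∃ v : Fin 2 → ℂ, Ym = offBlock v)
    (hXdec : X = Xk + Xm) (hYdec : Y = Yk + Ym)
    (hb : X * Y - Y * X = 0)
    (hbk : Xk * Yk - Yk * Xk = 0)
    (hbm : Xm * Ym - Ym * Xm = 0) :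
    ∃ M ∈ Submodule.span ℝ ({X, Y} : Set (Matrix (Fin 3) (Fin 3) ℂ)),
      M = Matrix.diagonal ![Complex.I, Complex.I, -2 * Complex.I]
      ∨ ∃ B : Matrix (Fin 2) (Fin 2) ℂ, B * Bᴴ = 1 ∧
          M = blockDiag2 B (B.det)⁻¹
                * Matrix.diagonal ![-2 * Complex.I, Complex.I, Complex.I]
                * (blockDiag2 B (B.det)⁻¹)⁻¹ := by
  obtain ⟨A, hA, rfl⟩ := hXk
  obtain ⟨C, hC, rfl⟩ := hYk
  obtain ⟨v, rfl⟩ := hXm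
  obtain ⟨w, rfl⟩ := hYm
  subst hXdec hYdec
  obtain ⟨M, hM, hconj⟩ :=
    zero_curvature_plane_su3_general hA hC hind (sub_eq_zero.mp hb) (sub_eq_zero.mp hbm)
  exact ⟨M, hM, Or.inr hconj⟩
end

section
/- Let A be a 2×2 traceless skew-Hermitian complex matrix and v ∈ ℂ². Set X = blockdiag(A, 0) ∈ 𝔰𝔲(3) and Y_v = [[0₂ₓ₂, v],[−v*, 0]] ∈ 𝔰𝔲(3). If A ≠ 0 and v ≠ 0, then the commutator X·Y_v − Y_v·X is nonzero. (More precisely, for any 2×2 skew-Hermitian A one has [blockdiag(A,−tr A), Y_v] = Y_{Av + (tr A)v}, and a nonzero traceless skew-Hermitian 2×2 matrix annihilates no nonzero vector.) -/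
open Matrix Complex

/-!
The block-diagonal `𝔲(2)` acts on the tangent space of `ℂP²` through the bracket: for `A` and `c`
skew-Hermitian, `[blockdiag(A, c), Y_v] = Y_{Av - cv}`. Hence the vertizontal condition asks that
a nonzero traceless skew-Hermitian 2×2 matrix `A` be injective. By Cayley–Hamilton
`A² = -det A • 1`, so if `A` were singular then `Aᴴ A = -A² = 0`, forcing `A = 0`.
-/

section SkewHermitian

variable {n R : Type*} [Fintype n]

theorem mul_self_eq_neg_det_smul_one_of_trace_eq_zero [DecidableEq n] [CommRing R]
    (hn : Fintype.card n = 2) {A : Matrix n n R} (hA : A.trace = 0) :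
    A * A = -A.det • (1 : Matrix n n R) := by
  nontriviality R
  have cayley_hamilton : A * A + A.det • (1 : Matrix n n R) = 0 := by
    simpa [charpoly_of_card_eq_two A hn, hA, sq, Algebra.algebraMap_eq_smul_one] using
      A.aeval_self_charpoly
  rw [neg_smul]
  exact eq_neg_of_add_eq_zero_left cayley_hamilton

theorem eq_zero_of_conjTranspose_eq_neg_of_mul_self_eq_zero [NonUnitalRing R] [PartialOrder R]
    [StarRing R] [StarOrderedRing R] [NoZeroDivisors R] {A : Matrix n n R} (hA : Aᴴ = -A)
    (hsq : A * A = 0) : A = 0 := by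
  apply conjTranspose_mul_self_eq_zero.mp
  rw [hA, neg_mul, hsq, neg_zero]

theorem det_ne_zero_of_conjTranspose_eq_neg_of_trace_eq_zero [DecidableEq n] [CommRing R]
    [PartialOrder R] [StarRing R] [StarOrderedRing R] [NoZeroDivisors R]
    (hn : Fintype.card n = 2) {A : Matrix n n R} (hA : Aᴴ = -A) (htr : A.trace = 0)
    (hne : A ≠ 0) : A.det ≠ 0 := by
  intro hdet
  apply hne
  apply eq_zero_of_conjTranspose_eq_neg_of_mul_self_eq_zero hA
  rw [mul_self_eq_neg_det_smul_one_of_trace_eq_zero hn htr, hdet, neg_zero, zero_smul]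

end SkewHermitian

theorem fromBlocks_diagonal_commutator_offDiagonal {m n R : Type*} [Fintype m] [Fintype n]
    [NonUnitalNonAssocRing R] [StarRing R] {A : Matrix m m R} {D : Matrix n n R} (hA : Aᴴ = -A)
    (hD : Dᴴ = -D) (B : Matrix m n R) :
    fromBlocks A 0 0 D * fromBlocks 0 B (-Bᴴ) 0 - fromBlocks 0 B (-Bᴴ) 0 * fromBlocks A 0 0 D
      = fromBlocks 0 (A * B - B * D) (-(A * B - B * D)ᴴ) 0 := by
  simp only [sub_eq_add_neg, fromBlocks_neg, fromBlocks_multiply, fromBlocks_add,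
    conjTranspose_add, conjTranspose_neg, conjTranspose_mul, hA, hD]
  congr 1 <;> simp [add_comm]

theorem mul_replicateCol_sub_replicateCol_mul_diagonal {ι n R : Type*} [Fintype ι]
    [DecidableEq ι] [Fintype n] [NonUnitalNonAssocCommRing R]
    (A : Matrix n n R) (v : n → R) (c : R) :
    A * replicateCol ι v - replicateCol ι v * (diagonal fun _ : ι => c)
      = replicateCol ι (A *ᵥ v - c • v) := by
  rw [← replicateCol_mulVec]
  ext i j
  simp [mul_diagonal, mul_comm c]

theorem blockDiag2_eq_reindex_fromBlocks (A : Matrix (Fin 2) (Fin 2) ℂ) (c : ℂ) :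
    blockDiag2 A c = reindexRingEquiv ℂ finSumFinEquiv
      (fromBlocks A 0 0 (diagonal fun _ : Fin 1 => c)) := by
  ext i j
  fin_cases i <;> fin_cases j <;> rfl

theorem offBlock_eq_reindex_fromBlocks (v : Fin 2 → ℂ) :
    offBlock v = reindexRingEquiv ℂ finSumFinEquiv
      (fromBlocks 0 (replicateCol (Fin 1) v) (-(replicateCol (Fin 1) v)ᴴ) 0) := by
  ext i j
  fin_cases i <;> fin_cases j <;> rfl

theorem offBlock_eq_zero_iff {v : Fin 2 → ℂ} : offBlock v = 0 ↔ v = 0 := by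
  rw [offBlock_eq_reindex_fromBlocks, map_eq_zero_iff _ (RingEquiv.injective _),
    ← fromBlocks_zero, fromBlocks_inj]
  simp +contextual

theorem blockDiag2_commutator_offBlock {A : Matrix (Fin 2) (Fin 2) ℂ} {c : ℂ} (hA : Aᴴ = -A)
    (hc : star c = -c) (v : Fin 2 → ℂ) :
    blockDiag2 A c * offBlock v - offBlock v * blockDiag2 A c = offBlock (A *ᵥ v - c • v) := by
  have hD : (diagonal fun _ : Fin 1 => c)ᴴ = -diagonal fun _ => c := by
    rw [diagonal_conjTranspose, diagonal_neg, Pi.star_def, hc]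
  simp only [blockDiag2_eq_reindex_fromBlocks, offBlock_eq_reindex_fromBlocks, ← map_mul,
    ← map_sub, fromBlocks_diagonal_commutator_offDiagonal hA hD,
    mul_replicateCol_sub_replicateCol_mul_diagonal]

/-- **Vertizontal condition for `S² → SU(3)/T² → ℂP²` (Ziller, Section 4).**
For `A` a traceless skew-Hermitian `2×2` matrix and `v ∈ ℂ²`, with
`X = blockdiag(A,0)` and `Y_v = [[0,v],[−v*,0]]`: if `A ≠ 0` and `v ≠ 0` then
`[X, Y_v] ≠ 0`.  More precisely, for any `2×2` skew-Hermitian `A'` one has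
`[blockdiag(A',−tr A'), Y_v] = Y_{A'v + (tr A')v}`, and a nonzero traceless
skew-Hermitian `2×2` matrix annihilates no nonzero vector. -/
theorem vertizontal_su3_flag
    (A : Matrix (Fin 2) (Fin 2) ℂ) (hA : Aᴴ = -A) (hAtr : A.trace = 0)
    (v : Fin 2 → ℂ) :
    (A ≠ 0 → v ≠ 0 →
        blockDiag2 A 0 * offBlock v - offBlock v * blockDiag2 A 0 ≠ 0)
    ∧ (∀ A' : Matrix (Fin 2) (Fin 2) ℂ, A'ᴴ = -A' →
        blockDiag2 A' (-A'.trace) * offBlock v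
            - offBlock v * blockDiag2 A' (-A'.trace)
          = offBlock (A'.mulVec v + A'.trace • v))
    ∧ (A ≠ 0 → ∀ w : Fin 2 → ℂ, w ≠ 0 → A.mulVec w ≠ 0) := by
  have mulVec_ne_zero : A ≠ 0 → ∀ w : Fin 2 → ℂ, w ≠ 0 → A *ᵥ w ≠ 0 := by
    intro hne w hw hAw
    open scoped ComplexOrder in
    exact hw <| eq_zero_of_mulVec_eq_zero
      (det_ne_zero_of_conjTranspose_eq_neg_of_trace_eq_zero (Fintype.card_fin 2) hA hAtr hne) hAw
  refine ⟨fun hne hv => ?_, fun A' hA' => ?_, mulVec_ne_zero⟩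
  · rw [blockDiag2_commutator_offBlock hA (by simp), zero_smul, sub_zero, ne_eq,
      offBlock_eq_zero_iff]
    exact mulVec_ne_zero hne v hv
  · have htr : star (-A'.trace) = - -A'.trace := by
      rw [star_neg, ← trace_conjTranspose, hA', trace_neg]
    rw [blockDiag2_commutator_offBlock hA' htr, neg_smul, sub_neg_eq_add]
end

section
/- Let p, q be integers with pq > 0, let a ∈ ℝ, z ∈ ℂ with (a,z) ≠ (0,0), and let v ∈ ℂ² with v ≠ 0. Set A = [[i(2q+p)a, z],[−conj(z), −i(q+2p)a]]. Then A·v + i(q−p)a·v ≠ 0; equivalently, i(p−q)a is not an eigenvalue of A unless a = 0 and z = 0. -/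
open Matrix Complex

/-!
The matrix `A + i(q − p)a` equals `[[3iqa, z], [−z̄, −3ipa]]`, whose determinant `9pq a² + |z|²` is
positive as soon as `pq > 0` and `(a, z) ≠ (0, 0)`; hence it kills no nonzero vector.
-/

theorem mulVec_add_smul_ne_zero_of_det_ne_zero {n R : Type*} [Fintype n] [DecidableEq n]
    [CommRing R] [IsDomain R] {M : Matrix n n R} {c : R} (hdet : (M + c • 1).det ≠ 0)
    {v : n → R} (hv : v ≠ 0) : M *ᵥ v + c • v ≠ 0 := by
  intro h
  refine hv (eq_zero_of_mulVec_eq_zero hdet ?_)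
  rwa [add_mulVec, smul_mulVec, one_mulVec]

theorem fin_two_add_smul_one {R : Type*} [NonAssocSemiring R] (a b c d t : R) :
    !![a, b; c, d] + t • (1 : Matrix (Fin 2) (Fin 2) R) = !![a + t, b; c, d + t] := by
  ext i j
  fin_cases i <;> fin_cases j <;> simp

theorem det_fin_two_skewHermitian (s t : ℝ) (z : ℂ) :
    !![I * s, z; -(starRingEnd ℂ) z, -(I * t)].det = ((s * t + normSq z : ℝ) : ℂ) := by
  rw [det_fin_two_of]
  push_cast
  linear_combination mul_conj z - s * t * I_mul_I

theorem mul_sq_add_normSq_pos {c a : ℝ} {z : ℂ} (hc : 0 < c) (haz : (a, z) ≠ (0, 0)) :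
    0 < c * a ^ 2 + normSq z := by
  rcases eq_or_ne a 0 with rfl | ha
  · have hz : z ≠ 0 := fun hz => haz (by rw [hz])
    simpa using hz
  · have := normSq_nonneg z
    positivity

theorem vertizontal_aloff_wallach_general
    (p q : ℝ) (hpq : 0 < p * q) (a : ℝ) (z : ℂ)
    (haz : (a, z) ≠ (0, 0)) (v : Fin 2 → ℂ) (hv : v ≠ 0) :
    !![I * ((2 * q + p : ℝ) : ℂ) * (a : ℂ), z;
        -(starRingEnd ℂ) z, -(I * ((q + 2 * p : ℝ) : ℂ) * (a : ℂ))] *ᵥ v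
      + (I * ((q - p : ℝ) : ℂ) * (a : ℂ)) • v ≠ 0 := by
  refine mulVec_add_smul_ne_zero_of_det_ne_zero ?_ hv
  have hdiag₀ : I * ((2 * q + p : ℝ) : ℂ) * a + I * ((q - p : ℝ) : ℂ) * a
      = I * ((3 * q * a : ℝ) : ℂ) := by
    push_cast
    ring
  have hdiag₁ : -(I * ((q + 2 * p : ℝ) : ℂ) * a) + I * ((q - p : ℝ) : ℂ) * a
      = -(I * ((3 * p * a : ℝ) : ℂ)) := by
    push_cast
    ring
  have hprod : 3 * q * a * (3 * p * a) = 9 * (p * q) * a ^ 2 := by ring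
  rw [fin_two_add_smul_one, hdiag₀, hdiag₁, det_fin_two_skewHermitian, hprod, ofReal_ne_zero]
  exact (mul_sq_add_normSq_pos (by positivity) haz).ne'

/-- **Vertizontal condition for the Aloff–Wallach spaces `W_{p,q}` (Ziller,
Section 4).**  Let `p, q` be integers with `pq > 0`, `a ∈ ℝ`, `z ∈ ℂ` with
`(a,z) ≠ (0,0)`, and `v ∈ ℂ²` nonzero.  With
`A = [[i(2q+p)a, z],[−z̄, −i(q+2p)a]]` one has `Av + i(q−p)a·v ≠ 0`;
equivalently, `i(p−q)a` is not an eigenvalue of `A` unless `a = 0` and `z = 0`. -/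
theorem vertizontal_aloff_wallach
    (p q : ℤ) (hpq : 0 < p * q) (a : ℝ) (z : ℂ)
    (haz : (a, z) ≠ (0, 0)) (v : Fin 2 → ℂ) (hv : v ≠ 0) :
    (!![Complex.I * ((2 * q + p : ℤ) : ℂ) * (a : ℂ), z;
        -(starRingEnd ℂ) z, -(Complex.I * ((q + 2 * p : ℤ) : ℂ) * (a : ℂ))]).mulVec v
      + (Complex.I * ((q - p : ℤ) : ℂ) * (a : ℂ)) • v ≠ 0 := by
  exact_mod_cast vertizontal_aloff_wallach_general p q (mod_cast hpq) a z haz v hv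
end

section
/- Let Sp(2) denote the group of 2×2 quaternionic matrices A with A·A* = I (conjugate-transpose with respect to quaternionic conjugation), and let Sp(1) be the group of unit quaternions. The action of Sp(1) on Sp(2) defined by q ⋆ A = diag(q,q)·A·diag(q,1)⁻¹ is free: if q is a unit quaternion and A ∈ Sp(2) satisfies diag(q,q)·A·diag(q,1)⁻¹ = A, then q = 1. -/
open Matrix Quaternion

/-!
The entry `1` of `diag(q, 1)` makes every entry of the second column of `A` a fixed point of left
multiplication by `q`. Since `A` is invertible, that column has a nonzero entry, which cancels.
-/

theorem col_ne_zero_of_mul_eq_one {R m n : Type*} [NonAssocSemiring R] [Nontrivial R]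
    [Fintype m] [DecidableEq n] {A : Matrix m n R} {B : Matrix n m R} (hBA : B * A = 1) (j : n) :
    A.col j ≠ 0 := by
  intro hcol
  have hjj : (B * A) j j = 0 := (congrArg (B j ⬝ᵥ ·) hcol).trans (dotProduct_zero _)
  rw [hBA, one_apply_eq] at hjj
  exact one_ne_zero hjj

theorem gromoll_meyer_action_free_general {R m n : Type*} [Semiring R] [IsDomain R]
    [Fintype m] [DecidableEq m] [Fintype n] [DecidableEq n] {A : Matrix m n R} {B : Matrix n m R}
    (hBA : B * A = 1) {q : R} {d : n → R} {j : n} (hj : d j = 1)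
    (hfix : diagonal (fun _ : m => q) * A * diagonal d = A) :
    q = 1 := by
  obtain ⟨i, hij⟩ : ∃ i, A i j ≠ 0 := Function.ne_iff.mp (col_ne_zero_of_mul_eq_one hBA j)
  have hq : q * A i j = A i j := by
    simpa only [mul_diagonal, diagonal_mul, hj, mul_one] using congrFun₂ hfix i j
  exact (mul_eq_right₀ hij).mp hq

/-- **Freeness of the Gromoll–Meyer action (Theorem 2.2 setup).**  The action
of the unit quaternions `Sp(1)` on `Sp(2) = {A ∈ M₂(ℍ) : AA* = 1}` given by
`q ⋆ A = diag(q,q)·A·diag(q,1)⁻¹` is free: if `‖q‖ = 1` and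
`diag(q,q)·A·diag(q⁻¹,1) = A` for some `A ∈ Sp(2)`, then `q = 1`. -/
theorem gromoll_meyer_action_free
    (q : Quaternion ℝ) (hq : ‖q‖ = 1)
    (A : Matrix (Fin 2) (Fin 2) (Quaternion ℝ)) (hA : A * Aᴴ = 1)
    (hfix : Matrix.diagonal ![q, q] * A * Matrix.diagonal ![q⁻¹, 1] = A) :
    q = 1 := by
  have hconst : ![q, q] = fun _ => q := funext (Fin.forall_fin_two.mpr ⟨rfl, rfl⟩)
  exact gromoll_meyer_action_free_general (mul_eq_one_comm.mp hA) (j := 1) rfl (hconst ▸ hfix)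
end

section
/- Let k = (k₁,k₂,k₃) and l = (l₁,l₂,l₃) be triples of integers with k₁+k₂+k₃ = l₁+l₂+l₃, and consider the action of the circle group S¹ = {z ∈ ℂ : |z| = 1} on SU(3) given by z ⋆ g = diag(z^{k₁}, z^{k₂}, z^{k₃}) · g · diag(z^{l₁}, z^{l₂}, z^{l₃})⁻¹. This action is free (i.e. z ⋆ g = g for some g ∈ SU(3) implies z = 1) if and only if gcd(k₁ − l_i, k₂ − l_j) = 1 for all i ≠ j with i, j ∈ {1,2,3}. -/
open Matrix Complex

/-!
An element `z` fixes `g` exactly when `z ^ kᵢ = z ^ lⱼ` at every nonzero entry `g i j`. Since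
`det g ≠ 0`, the support of `g` contains the graph of a permutation, and conversely the graph of
every permutation is the support of a signed permutation matrix in `SU(n)`. Hence `z` has a fixed
point iff for some `σ` all `z ^ (kᵢ - l (σ i))` are `1`, that is, iff `z ^ d = 1` for the gcd `d` of
these exponents; this forces `z = 1` on the whole circle exactly when `d = 1`. For `n = 3` the
exponents sum to zero, so the third one does not contribute to the gcd.
-/

lemma intCast_units_mem_unitary {R : Type*} [Ring R] [StarRing R] (u : ℤˣ) :
    ((u : ℤ) : R) ∈ unitary R := by
  obtain rfl | rfl := Int.units_eq_one_or u <;> simp [Unitary.mem_iff]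

section FixedMatrices

variable {n R : Type*} [Fintype n] [DecidableEq n] [CommRing R]

lemma diagonal_mul_mul_diagonal_inv_eq_self_iff [IsDomain R] {d e : n → R} (he : IsUnit e)
    {A : Matrix n n R} :
    diagonal d * A * (diagonal e)⁻¹ = A ↔ ∀ i j, A i j ≠ 0 → d i = e j := by
  have := (isUnit_diagonal.mpr he).invertible
  rw [mul_inv_eq_iff_eq_mul_of_invertible, ← Matrix.ext_iff]
  simp only [diagonal_mul, mul_diagonal, mul_comm (d _), mul_eq_mul_left_iff, ne_eq,
    or_iff_not_imp_right]

lemma exists_perm_apply_ne_zero_of_det_ne_zero {A : Matrix n n R} (hA : A.det ≠ 0) :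
    ∃ σ : Equiv.Perm n, ∀ i, A i (σ i) ≠ 0 := by
  rw [← det_transpose, det_apply] at hA
  obtain ⟨σ, -, hσ⟩ := Finset.exists_ne_zero_of_sum_ne_zero hA
  refine ⟨σ, fun i hi ↦ hσ ?_⟩
  rw [Finset.prod_eq_zero (Finset.mem_univ i) hi, smul_zero]

variable [StarRing R]

lemma diagonal_mem_unitaryGroup {d : n → R} (hd : ∀ i, d i ∈ unitary R) :
    diagonal d ∈ unitaryGroup n R := by
  rw [mem_unitaryGroup_iff, star_eq_conjTranspose, diagonal_conjTranspose, diagonal_mul_diagonal,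
    diagonal_eq_one]
  exact funext fun i ↦ Unitary.mul_star_self_of_mem (hd i)

lemma permMatrix_mem_unitaryGroup (σ : Equiv.Perm n) : σ.permMatrix R ∈ unitaryGroup n R := by
  rw [mem_unitaryGroup_iff, star_eq_conjTranspose, conjTranspose_permMatrix, ← permMatrix_mul,
    inv_mul_cancel, permMatrix_one]

lemma exists_mem_specialUnitaryGroup_apply_eq_zero (σ : Equiv.Perm n) :
    ∃ A ∈ specialUnitaryGroup n R, ∀ i j, σ i ≠ j → A i j = 0 := by
  cases isEmpty_or_nonempty n with
  | inl _ => exact ⟨1, one_mem _, isEmptyElim⟩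
  | inr hn =>
    obtain ⟨i₀⟩ := hn
    set d : n → R := Pi.mulSingle i₀ ((Equiv.Perm.sign σ : ℤ) : R)
    have hd (i : n) : d i ∈ unitary R := by
      by_cases hi : i = i₀
      · subst hi
        simpa only [d, Pi.mulSingle_eq_same] using intCast_units_mem_unitary _
      · simpa only [d, Pi.mulSingle_eq_of_ne hi] using one_mem _
    refine ⟨diagonal d * σ.permMatrix R,
      mem_specialUnitaryGroup_iff.mpr
        ⟨mul_mem (diagonal_mem_unitaryGroup hd) (permMatrix_mem_unitaryGroup σ), ?_⟩,
      fun i j hij ↦ ?_⟩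
    · rw [det_mul, det_diagonal, Fintype.prod_pi_mulSingle', det_permutation, ← Int.cast_mul,
        Int.units_coe_mul_self, Int.cast_one]
    · simp [PEquiv.toMatrix_apply, hij]

theorem exists_mem_specialUnitaryGroup_fixed_iff [IsDomain R] {d e : n → R} (he : IsUnit e) :
    (∃ A ∈ specialUnitaryGroup n R, diagonal d * A * (diagonal e)⁻¹ = A) ↔
      ∃ σ : Equiv.Perm n, ∀ i, d i = e (σ i) := by
  simp only [diagonal_mul_mul_diagonal_inv_eq_self_iff he]
  constructor
  · rintro ⟨A, hA, hfix⟩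
    have hdet : A.det ≠ 0 := (mem_specialUnitaryGroup_iff.mp hA).2 ▸ one_ne_zero
    obtain ⟨σ, hσ⟩ := exists_perm_apply_ne_zero_of_det_ne_zero hdet
    exact ⟨σ, fun i ↦ hfix i (σ i) (hσ i)⟩
  · rintro ⟨σ, hσ⟩
    obtain ⟨A, hA, hsupp⟩ := exists_mem_specialUnitaryGroup_apply_eq_zero (R := R) σ
    refine ⟨A, hA, fun i j hij ↦ ?_⟩
    obtain rfl : σ i = j := not_imp_comm.mp (hsupp i j) hij
    exact hσ i

end FixedMatrices

lemma zpow_eq_zpow_iff_zpow_sub_eq_one {G₀ : Type*} [GroupWithZero G₀] {z : G₀} (hz : z ≠ 0)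
    (a b : ℤ) : z ^ a = z ^ b ↔ z ^ (a - b) = 1 := by
  rw [zpow_sub₀ hz, div_eq_one_iff_eq (zpow_ne_zero b hz)]

lemma zpow_finset_gcd_eq_one_iff {ι G₀ : Type*} [GroupWithZero G₀] {z : G₀} (hz : z ≠ 0)
    (s : Finset ι) (f : ι → ℤ) : z ^ s.gcd f = 1 ↔ ∀ i ∈ s, z ^ f i = 1 := by
  lift z to G₀ˣ using hz.isUnit
  norm_cast
  simp only [← orderOf_dvd_iff_zpow_eq_one, Finset.dvd_gcd_iff]

lemma forall_norm_eq_one_pow_eq_one_iff {m : ℕ} :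
    (∀ z : ℂ, ‖z‖ = 1 → z ^ m = 1 → z = 1) ↔ m = 1 := by
  refine ⟨fun h ↦ ?_, fun hm z _ hz ↦ by rwa [hm, pow_one] at hz⟩
  obtain rfl | hm := eq_or_ne m 0
  · exact absurd (h (-1) (by simp) (pow_zero _)) (by norm_num)
  · have hζ := Complex.isPrimitiveRoot_exp m hm
    rw [h _ (hζ.norm'_eq_one hm) hζ.pow_eq_one] at hζ
    exact hζ.unique .one

lemma forall_norm_eq_one_zpow_eq_one_iff {d : ℤ} :
    (∀ z : ℂ, ‖z‖ = 1 → z ^ d = 1 → z = 1) ↔ IsUnit d := by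
  obtain ⟨m, rfl | rfl⟩ := d.eq_nat_or_neg <;>
    simp only [_root_.zpow_neg, inv_eq_one, zpow_natCast, forall_norm_eq_one_pow_eq_one_iff,
      IsUnit.neg_iff, Int.ofNat_isUnit, Nat.isUnit_iff]

theorem eschenburg_action_free_iff_general {n : Type*} [Fintype n] [DecidableEq n] (k l : n → ℤ) :
    (∀ z : ℂ, ‖z‖ = 1 →
      (∃ g : Matrix n n ℂ, g * gᴴ = 1 ∧ g.det = 1 ∧
        Matrix.diagonal (fun i => z ^ (k i)) * g *
          (Matrix.diagonal (fun i => z ^ (l i)))⁻¹ = g) → z = 1)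
    ↔ ∀ σ : Equiv.Perm n, Finset.univ.gcd (fun i ↦ k i - l (σ i)) = 1 := by
  have fixed_iff (z : ℂ) (hz : ‖z‖ = 1) :
      (∃ g : Matrix n n ℂ, g * gᴴ = 1 ∧ g.det = 1 ∧
        diagonal (fun i ↦ z ^ k i) * g * (diagonal (fun i ↦ z ^ l i))⁻¹ = g) ↔
      ∃ σ : Equiv.Perm n, z ^ Finset.univ.gcd (fun i ↦ k i - l (σ i)) = 1 := by
    have hz₀ : z ≠ 0 := norm_ne_zero_iff.mp (hz ▸ one_ne_zero)
    have hl : IsUnit (fun i ↦ z ^ l i) := Pi.isUnit_iff.mpr fun i ↦ (zpow_ne_zero _ hz₀).isUnit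
    simpa only [mem_specialUnitaryGroup_iff, mem_unitaryGroup_iff, star_eq_conjTranspose, and_assoc,
      zpow_finset_gcd_eq_one_iff hz₀, Finset.mem_univ, true_imp_iff,
      zpow_eq_zpow_iff_zpow_sub_eq_one hz₀] using
      exists_mem_specialUnitaryGroup_fixed_iff (d := fun i ↦ z ^ k i) hl
  calc
    _ ↔ ∀ z : ℂ, ‖z‖ = 1 →
        (∃ σ : Equiv.Perm n, z ^ Finset.univ.gcd (fun i ↦ k i - l (σ i)) = 1) → z = 1 :=
      forall₂_congr fun z hz ↦ by rw [fixed_iff z hz]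
    _ ↔ ∀ σ : Equiv.Perm n, IsUnit (Finset.univ.gcd fun i ↦ k i - l (σ i)) := by
      simp only [← forall_norm_eq_one_zpow_eq_one_iff]
      exact ⟨fun h σ z hz hσ ↦ h z hz ⟨σ, hσ⟩, fun h z hz ⟨σ, hσ⟩ ↦ h σ z hz hσ⟩
    _ ↔ _ := by simp only [← normalize_eq_one, Finset.normalize_gcd]

lemma gcd_erase_of_sum_eq_zero {ι R : Type*} [DecidableEq ι] [CommRing R] [NormalizedGCDMonoid R]
    {s : Finset ι} {f : ι → R} (hf : ∑ i ∈ s, f i = 0) {a : ι} (ha : a ∈ s) :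
    (s.erase a).gcd f = s.gcd f := by
  have hdvd : (s.erase a).gcd f ∣ f a := by
    rw [← Finset.add_sum_erase s f ha] at hf
    rw [eq_neg_of_add_eq_zero_left hf, dvd_neg]
    exact Finset.dvd_sum fun _ ↦ Finset.gcd_dvd
  conv_rhs => rw [← Finset.insert_erase ha, Finset.gcd_insert]
  exact ((gcd_eq_right_iff _ _ Finset.normalize_gcd).mpr hdvd).symm

lemma finset_gcd_fin_three_of_sum_eq_zero {a : Fin 3 → ℤ} (ha : ∑ i, a i = 0) :
    Finset.univ.gcd a = Int.gcd (a 0) (a 1) := by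
  rw [← gcd_erase_of_sum_eq_zero ha (Finset.mem_univ 2),
    show Finset.univ.erase (2 : Fin 3) = {0, 1} by decide]
  rw [Finset.gcd_insert, Finset.gcd_singleton, (normalize_associated _).gcd_eq_right, Int.coe_gcd]

lemma forall_perm_apply_apply_iff {α : Type*} {a b : α} (hab : a ≠ b) {p : α → α → Prop} :
    (∀ σ : Equiv.Perm α, p (σ a) (σ b)) ↔ ∀ i j, i ≠ j → p i j := by
  refine ⟨fun h i j hij ↦ ?_, fun h σ ↦ h _ _ (σ.injective.ne hab)⟩
  obtain ⟨σ, rfl, rfl⟩ := MulAction.is_two_pretransitive_iff.mp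
    (Equiv.Perm.isMultiplyPretransitive α 2) hab hij
  exact h σ

lemma forall_perm_gcd_eq_one_iff {k l : Fin 3 → ℤ} (hsum : ∑ i, k i = ∑ i, l i) :
    (∀ σ : Equiv.Perm (Fin 3), Finset.univ.gcd (fun i ↦ k i - l (σ i)) = 1) ↔
      ∀ i j, i ≠ j → Int.gcd (k 0 - l i) (k 1 - l j) = 1 := by
  have hzero (σ : Equiv.Perm (Fin 3)) : ∑ i, (k i - l (σ i)) = 0 := by
    rw [Finset.sum_sub_distrib, Equiv.sum_comp, hsum, sub_self]
  simp only [finset_gcd_fin_three_of_sum_eq_zero (hzero _), Nat.cast_eq_one]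
  exact forall_perm_apply_apply_iff (p := fun i j ↦ Int.gcd (k 0 - l i) (k 1 - l j) = 1)
    zero_ne_one

/-- **Freeness criterion for the Eschenburg biquotient action.**  For triples of
integers `k, l` with `∑kᵢ = ∑lᵢ`, the circle action on `SU(3)` given by
`z ⋆ g = diag(z^{k₁},z^{k₂},z^{k₃})·g·diag(z^{l₁},z^{l₂},z^{l₃})⁻¹` is free
(i.e. `z ⋆ g = g` for some `g ∈ SU(3)` implies `z = 1`) if and only if
`gcd(k₁ − lᵢ, k₂ − lⱼ) = 1` for all `i ≠ j`. -/
theorem eschenburg_action_free_iff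
    (k l : Fin 3 → ℤ) (hsum : ∑ i, k i = ∑ i, l i) :
    (∀ z : ℂ, ‖z‖ = 1 →
      (∃ g : Matrix (Fin 3) (Fin 3) ℂ, g * gᴴ = 1 ∧ g.det = 1 ∧
        Matrix.diagonal (fun i => z ^ (k i)) * g *
          (Matrix.diagonal (fun i => z ^ (l i)))⁻¹ = g) → z = 1)
    ↔ (∀ i j : Fin 3, i ≠ j → Int.gcd (k 0 - l i) (k 1 - l j) = 1) :=
  (eschenburg_action_free_iff_general k l).trans (forall_perm_gcd_eq_one_iff hsum)
end

section
/- Consider the action of the 2-torus T² = {(z,w) ∈ ℂ² : |z| = |w| = 1} on SU(3) given by (z,w) ⋆ g = diag(z, w, zw) · g · diag(1, 1, z²w²)⁻¹. This action is free: if (z,w) ⋆ g = g for some g ∈ SU(3), then z = w = 1. -/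
open Matrix Complex

/-!
A fixed point `g` of `(z, w)` conjugates `diag(1, 1, z²w²)` into `diag(z, w, zw)`, so the two
diagonal matrices have the same eigenvalues with multiplicity. Hence at least two of `z`, `w`, `zw`
are equal to `1`, and any two of them being `1` forces `z = w = 1`.
-/

section Spectrum

variable {n R : Type*} [Fintype n] [DecidableEq n] [CommRing R]

theorem charpoly_eq_of_mul_eq_mul {A B g : Matrix n n R} (hg : IsUnit g) (h : A * g = g * B) :
    A.charpoly = B.charpoly := by
  obtain ⟨u, rfl⟩ := hg
  rw [← charpoly_units_conj u B, ← coe_units_inv, ← h, Units.mul_inv_cancel_right]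

theorem roots_charpoly_diagonal [IsDomain R] (d : n → R) :
    (diagonal d).charpoly.roots = Finset.univ.val.map d := by
  rw [charpoly_diagonal, ← Polynomial.roots_multiset_prod_X_sub_C (Finset.univ.val.map d),
    Multiset.map_map]
  rfl

theorem map_univ_eq_of_diagonal_mul_eq_mul_diagonal [IsDomain R] {d e : n → R} {g : Matrix n n R}
    (hg : IsUnit g) (h : diagonal d * g = g * diagonal e) :
    Finset.univ.val.map d = Finset.univ.val.map e := by
  rw [← roots_charpoly_diagonal, ← roots_charpoly_diagonal, charpoly_eq_of_mul_eq_mul hg h]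

end Spectrum

theorem eq_one_and_eq_one_of_pair_one_le {M : Type*} [MulOneClass M] {z w : M}
    (h : {1, 1} ≤ ({z, w, z * w} : Multiset M)) : z = 1 ∧ w = 1 := by
  rcases eq_or_ne 1 z with rfl | hz
  · have hrest : {1} ≤ ({w, 1 * w} : Multiset M) := (Multiset.cons_le_cons_iff 1).mp h
    simpa [eq_comm] using hrest
  have htail : {1, 1} ≤ ({w, z * w} : Multiset M) :=
    (Multiset.le_cons_of_notMem (by simp [hz.symm])).mp h
  rcases eq_or_ne 1 w with rfl | hw
  · have hrest : {1} ≤ ({z * 1} : Multiset M) := (Multiset.cons_le_cons_iff 1).mp htail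
    simpa [eq_comm] using hrest
  · have hlast : {1, 1} ≤ ({z * w} : Multiset M) :=
      (Multiset.le_cons_of_notMem (by simp [hw.symm])).mp htail
    exact absurd (Multiset.card_le_card hlast) (by simp)

theorem eschenburg_flag_action_free_general {R : Type*} [CommRing R] [IsDomain R] {z w t : R}
    (ht : IsUnit t) {g : Matrix (Fin 3) (Fin 3) R} (hg : IsUnit g)
    (hfix : diagonal ![z, w, z * w] * g * (diagonal ![1, 1, t])⁻¹ = g) :
    z = 1 ∧ w = 1 := by
  have hdet : IsUnit (diagonal ![1, 1, t]).det := by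
    simpa [Fin.prod_univ_three] using ht
  have hintertwine : diagonal ![z, w, z * w] * g = g * diagonal ![1, 1, t] := by
    rw [← nonsing_inv_mul_cancel_right _ (diagonal ![z, w, z * w] * g) hdet, hfix]
  have hspectrum : ({z, w, z * w} : Multiset R) = {1, 1, t} :=
    map_univ_eq_of_diagonal_mul_eq_mul_diagonal hg hintertwine
  have hpair : ({1, 1} : Multiset R) ≤ {1, 1, t} := by simp [Multiset.insert_eq_cons]
  exact eq_one_and_eq_one_of_pair_one_le (hpair.trans_eq hspectrum.symm)

/-- **Freeness of the torus action defining the Eschenburg flag `E⁶`.**  The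
action of `T² = {(z,w) : |z| = |w| = 1}` on `SU(3)` given by
`(z,w) ⋆ g = diag(z,w,zw)·g·diag(1,1,z²w²)⁻¹` is free: if `(z,w) ⋆ g = g` for
some `g ∈ SU(3)`, then `z = w = 1`. -/
theorem eschenburg_flag_action_free
    (z w : ℂ) (hz : ‖z‖ = 1) (hw : ‖w‖ = 1)
    (g : Matrix (Fin 3) (Fin 3) ℂ) (hg : g * gᴴ = 1) (hdet : g.det = 1)
    (hfix : Matrix.diagonal ![z, w, z * w] * g *
      (Matrix.diagonal ![1, 1, z ^ 2 * w ^ 2])⁻¹ = g) :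
    z = 1 ∧ w = 1 := by
  have ht : z ^ 2 * w ^ 2 ≠ 0 := norm_ne_zero_iff.mp (by simp [hz, hw])
  exact eschenburg_flag_action_free_general ht.isUnit (.of_mul_eq_one _ hg) hfix
end

section
/- Let U be an n×n complex unitary matrix and let a, h : Fin n → ℝ. Then Re tr(U · diag(a) · U* · diag(h)) lies between the minimum and the maximum, over all permutations σ of {1,…,n}, of ∑ᵢ a_{σ(i)} h_i. Equivalently, for the ad-invariant inner product Q(A,B) = Re tr(AB*) on 𝔲(n) and diagonal skew-Hermitian matrices X = diag(ia₁,…,iaₙ), H = diag(ih₁,…,ihₙ), the value Q(U X U⁻¹, H) always lies in the interval [min_σ ∑ᵢ a_{σ(i)}h_i, max_σ ∑ᵢ a_{σ(i)}h_i]. -/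
open Matrix Complex

/-!
The trace equals `∑ᵢⱼ ‖Uᵢⱼ‖² aⱼ hᵢ`, which is linear in the matrix `(‖Uᵢⱼ‖²)`. Rows and columns of a
unitary matrix are unit vectors, so that matrix is doubly stochastic. By Birkhoff's theorem it is a
convex combination of permutation matrices, and a linear function on a convex hull attains its
extreme values at the generating points, where it equals `∑ᵢ a_{σ(i)} hᵢ`.
-/

section DoublyStochastic

variable {R ι : Type*} [Field R] [LinearOrder R] [IsStrictOrderedRing R] [Fintype ι]
  [DecidableEq ι] {M : Matrix ι ι R}

theorem exists_mulVec_dotProduct_le_comp_perm (hM : M ∈ doublyStochastic R ι) (a h : ι → R) :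
    ∃ σ : Equiv.Perm ι, M *ᵥ a ⬝ᵥ h ≤ a ∘ σ ⬝ᵥ h := by
  let f : Matrix ι ι R →ₗ[R] R :=
    (dotProductBilin R R).flip h ∘ₗ (mulVecBilin R R).flip a
  have hM_hull : M ∈ convexHull R {σ.permMatrix R | σ : Equiv.Perm ι} := by
    rwa [← doublyStochastic_eq_convexHull_permMatrix]
  obtain ⟨_, ⟨σ, rfl⟩, hσ⟩ :=
    (f.convexOn convex_univ).exists_ge_of_mem_convexHull (Set.subset_univ _) hM_hull
  exact ⟨σ, by simpa [f, permMatrix_mulVec] using hσ⟩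

theorem exists_comp_perm_le_mulVec_dotProduct (hM : M ∈ doublyStochastic R ι) (a h : ι → R) :
    ∃ σ : Equiv.Perm ι, a ∘ σ ⬝ᵥ h ≤ M *ᵥ a ⬝ᵥ h := by
  obtain ⟨σ, hσ⟩ := exists_mulVec_dotProduct_le_comp_perm hM a (-h)
  exact ⟨σ, by simpa only [dotProduct_neg, neg_le_neg_iff] using hσ⟩

end DoublyStochastic

section RCLike

variable {𝕜 m n : Type*} [RCLike 𝕜] [Fintype n]

theorem mul_conjTranspose_apply_self (A : Matrix m n 𝕜) (i : m) :
    (A * Aᴴ) i i = ((∑ j, ‖A i j‖ ^ 2 : ℝ) : 𝕜) := by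
  simp [mul_apply, RCLike.mul_conj]

theorem trace_mul_diagonal_mul_conjTranspose_mul_diagonal [Fintype m] [DecidableEq m]
    [DecidableEq n] (A : Matrix m n 𝕜) (a : n → ℝ) (h : m → ℝ) :
    trace (A * diagonal (fun j => (a j : 𝕜)) * Aᴴ * diagonal (fun i => (h i : 𝕜))) =
      ((A.map (‖·‖ ^ 2) *ᵥ a ⬝ᵥ h : ℝ) : 𝕜) := by
  have entry_eq (i : m) (j : n) : A i j * a j * star (A i j) = (‖A i j‖ ^ 2 * a j : 𝕜) := by
    rw [mul_right_comm, RCLike.star_def, RCLike.mul_conj]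
  simp only [trace, diag_apply, mul_diagonal, mul_apply (N := Aᴴ), conjTranspose_apply, entry_eq]
  simp [mulVec, dotProduct]

theorem sum_norm_sq_row_eq_one [DecidableEq m] {A : Matrix m n 𝕜} (hA : A * Aᴴ = 1) (i : m) :
    ∑ j, ‖A i j‖ ^ 2 = 1 := by
  have diag_eq := mul_conjTranspose_apply_self A i
  rw [hA, one_apply_eq] at diag_eq
  exact_mod_cast diag_eq.symm

theorem map_norm_sq_mem_doublyStochastic [DecidableEq n] {U : Matrix n n 𝕜}
    (hU : U ∈ unitaryGroup n 𝕜) : U.map (‖·‖ ^ 2) ∈ doublyStochastic ℝ n := by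
  refine mem_doublyStochastic_iff_sum.mpr ⟨fun i j => sq_nonneg ‖U i j‖, fun i => ?_, fun j => ?_⟩
  · exact sum_norm_sq_row_eq_one (mem_unitaryGroup_iff.mp hU) i
  · simpa using sum_norm_sq_row_eq_one (mem_unitaryGroup_iff.mp (Unitary.star_mem hU)) j

end RCLike

theorem adjoint_orbit_extremal_principle_general {𝕜 ι : Type*} [RCLike 𝕜] [Fintype ι]
    [DecidableEq ι] {U : Matrix ι ι 𝕜} (hU : U ∈ unitaryGroup ι 𝕜) (a h : ι → ℝ) :
    Finset.inf' Finset.univ ⟨1, Finset.mem_univ 1⟩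
        (fun σ : Equiv.Perm ι => ∑ i, a (σ i) * h i)
      ≤ RCLike.re (trace (U * diagonal (fun i => (a i : 𝕜)) * Uᴴ *
          diagonal (fun i => (h i : 𝕜))))
    ∧ RCLike.re (trace (U * diagonal (fun i => (a i : 𝕜)) * Uᴴ *
          diagonal (fun i => (h i : 𝕜))))
      ≤ Finset.sup' Finset.univ ⟨1, Finset.mem_univ 1⟩
          (fun σ : Equiv.Perm ι => ∑ i, a (σ i) * h i) := by
  rw [trace_mul_diagonal_mul_conjTranspose_mul_diagonal, RCLike.ofReal_re]
  have hM := map_norm_sq_mem_doublyStochastic hU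
  obtain ⟨σ, hσ⟩ := exists_comp_perm_le_mulVec_dotProduct hM a h
  obtain ⟨τ, hτ⟩ := exists_mulVec_dotProduct_le_comp_perm hM a h
  exact ⟨Finset.inf'_le_of_le _ (Finset.mem_univ σ) hσ,
    Finset.le_sup'_of_le _ (Finset.mem_univ τ) hτ⟩

/-- **Extremal principle for `Q(Ad(g)X, H)` (Ziller, proof of Prop. 4.6).**
For a unitary `U ∈ U(n)` and real tuples `a, h`, the value
`Re tr(U·diag(ia)·U*·diag(ih)*) = Re tr(U·diag(a)·U*·diag(h))` lies between the
minimum and maximum over all permutations `σ` of `∑ᵢ a_{σ(i)} h_i`. -/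
theorem adjoint_orbit_extremal_principle
    (n : ℕ) (U : Matrix (Fin n) (Fin n) ℂ) (hU : U * Uᴴ = 1)
    (a h : Fin n → ℝ) :
    Finset.inf' Finset.univ ⟨1, Finset.mem_univ 1⟩
        (fun σ : Equiv.Perm (Fin n) => ∑ i, a (σ i) * h i)
      ≤ (Matrix.trace (U * Matrix.diagonal (fun i => (a i : ℂ)) * Uᴴ *
          Matrix.diagonal (fun i => (h i : ℂ)))).re
    ∧ (Matrix.trace (U * Matrix.diagonal (fun i => (a i : ℂ)) * Uᴴ *
          Matrix.diagonal (fun i => (h i : ℂ)))).re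
      ≤ Finset.sup' Finset.univ ⟨1, Finset.mem_univ 1⟩
          (fun σ : Equiv.Perm (Fin n) => ∑ i, a (σ i) * h i) :=
  adjoint_orbit_extremal_principle_general (mem_unitaryGroup_iff.mpr hU) a h
end

section
/- Let a, b be unit quaternions and let v be a nonzero purely imaginary quaternion orthogonal to i (with respect to the standard inner product on ℍ ≅ ℝ⁴). If a v a⁻¹ = b v b⁻¹, then a⁻¹b is orthogonal to i; if a v a⁻¹ = −b v b⁻¹, then a⁻¹b is orthogonal to 1 (i.e. has zero real part). Hence if the conjugates ava⁻¹ and bvb⁻¹ are equal up to sign, then ā b ⊥ i or ā b ⊥ 1. -/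
open Quaternion
open scoped RealInnerProductSpace

/-- The quaternion `i`. -/
def quatI : Quaternion ℝ := ⟨0, 1, 0, 0⟩

/-!
Both claims come from one fact: as `Re` is invariant under conjugation, a quaternion that
anticommutes with a nonzero one has zero real part. If `ava⁻¹ = -bvb⁻¹`, then `c = āb`
anticommutes with `v`, so `Re c = 0`. If `ava⁻¹ = bvb⁻¹`, then `c` commutes with `v`, while `i`,
being imaginary and orthogonal to the imaginary quaternion `v`, anticommutes with it; so `ci`
anticommutes with `v`, and `⟪c, i⟫ = -Re (ci) = 0`.
-/

theorem semiconjBy_conj₀ {G₀ : Type*} [GroupWithZero G₀] (a x : G₀) :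
    SemiconjBy a x (a * x * a⁻¹) := by
  rcases eq_or_ne a 0 with rfl | ha
  · exact SemiconjBy.zero_left _ _
  · exact (inv_mul_cancel_right₀ ha (a * x)).symm

section CommRing

variable {R : Type*} [CommRing R] {c x y : ℍ[R]}

theorem quaternion_re_mul_comm (x y : ℍ[R]) : (x * y).re = (y * x).re := by
  simp only [re_mul]
  ring

theorem quaternion_mul_add_mul_swap_of_re_eq_zero (hx : x.re = 0) (hy : y.re = 0) :
    x * y + y * x = ↑(2 * (x * y).re) := by
  have star_x : star x = -x := by ext <;> simp [hx]
  have star_y : star y = -y := by ext <;> simp [hy]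
  rw [← self_add_star', star_mul, star_x, star_y, neg_mul_neg]

theorem semiconjBy_neg_of_re_mul_eq_zero (hx : x.re = 0) (hy : y.re = 0)
    (hxy : (x * y).re = 0) : SemiconjBy y x (-x) := by
  have anticomm : x * y + y * x = 0 := by
    rw [quaternion_mul_add_mul_swap_of_re_eq_zero hx hy, hxy, mul_zero, coe_zero]
  rw [SemiconjBy, neg_mul]
  exact eq_neg_of_add_eq_zero_right anticomm

theorem commute_quaternion_im_right (h : Commute c x) : Commute c x.im := by
  rw [← sub_re_self]
  exact h.sub_right (coe_commute x.re c).symm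

end CommRing

section LinearOrderedField

variable {R : Type*} [Field R] [LinearOrder R] [IsStrictOrderedRing R] {a b c v w x y : ℍ[R]}

theorem semiconjBy_star_symm_left (h : SemiconjBy a x y) : SemiconjBy (star a) y x := by
  rcases eq_or_ne a 0 with rfl | ha
  · rw [star_zero]
    exact SemiconjBy.zero_left _ _
  · have h_inv : SemiconjBy a⁻¹ y x := h.inv_symm_left₀
    rwa [inv_def, SemiconjBy.smul_left_iff₀ (inv_ne_zero (normSq_ne_zero.2 ha))] at h_inv

theorem semiconjBy_star_mul_of_conj_eq_conj (h : a * x * a⁻¹ = b * y * b⁻¹) :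
    SemiconjBy (star a * b) y x :=
  (semiconjBy_star_symm_left (semiconjBy_conj₀ a x)).mul_left (h ▸ semiconjBy_conj₀ b y)

theorem quaternion_re_eq_zero_of_semiconjBy_neg (hv : v ≠ 0) (h : SemiconjBy c v (-v)) :
    c.re = 0 := by
  have re_eq_neg : c.re = -c.re :=
    calc c.re = (c * v * v⁻¹).re := by rw [mul_inv_cancel_right₀ hv]
      _ = -(v * c * v⁻¹).re := by rw [h.eq, neg_mul, neg_mul, re_neg]
      _ = -c.re := by rw [quaternion_re_mul_comm, inv_mul_cancel_left₀ hv]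
  exact self_eq_neg.1 re_eq_neg

theorem quaternion_re_mul_eq_zero_of_commute (hv : v.im ≠ 0) (hw : w.re = 0)
    (hvw : (v * w).re = 0) (h : Commute c v) : (c * w).re = 0 := by
  have hvw_im : (v.im * w).re = 0 := by simpa [re_mul, hw] using hvw
  have w_anticomm : SemiconjBy w v.im (-v.im) :=
    semiconjBy_neg_of_re_mul_eq_zero (re_im v) hw hvw_im
  have c_comm : Commute c v.im := commute_quaternion_im_right h
  exact quaternion_re_eq_zero_of_semiconjBy_neg hv (c_comm.semiconjBy.neg_right.mul_left w_anticomm)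

end LinearOrderedField

section Real

variable {c v w : ℍ[ℝ]}

theorem quaternion_inner_eq_neg_re_mul (hw : w.re = 0) : ⟪c, w⟫ = -(c * w).re := by
  rw [inner_def, star_eq_neg.2 hw, mul_neg, re_neg]

theorem quaternion_inner_one_right (c : ℍ[ℝ]) : ⟪c, (1 : ℍ[ℝ])⟫ = c.re := by
  rw [inner_def, star_one, mul_one]

theorem quaternion_inner_eq_zero_of_commute (hv : v.im ≠ 0) (hw : w.re = 0) (hvw : ⟪v, w⟫ = 0)
    (h : Commute c v) : ⟪c, w⟫ = 0 := by
  rw [quaternion_inner_eq_neg_re_mul hw, neg_eq_zero] at hvw ⊢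
  exact quaternion_re_mul_eq_zero_of_commute hv hw hvw h

theorem wilking_zero_curvature_locus_general (a b : ℍ[ℝ]) (hv : v.im ≠ 0) (hw : w.re = 0)
    (hvw : ⟪v, w⟫ = 0) :
    (a * v * a⁻¹ = b * v * b⁻¹ → ⟪star a * b, w⟫ = 0)
    ∧ (a * v * a⁻¹ = -(b * v * b⁻¹) → ⟪star a * b, (1 : ℍ[ℝ])⟫ = 0) := by
  refine ⟨fun h => ?_, fun h => ?_⟩
  · have comm : Commute (star a * b) v := semiconjBy_star_mul_of_conj_eq_conj h
    exact quaternion_inner_eq_zero_of_commute hv hw hvw comm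
  · have hv0 : v ≠ 0 := by
      rintro rfl
      exact hv im_zero
    have anticomm : SemiconjBy (star a * b) v (-v) :=
      semiconjBy_star_mul_of_conj_eq_conj (by rw [mul_neg, neg_mul, h, neg_neg])
    rw [quaternion_inner_one_right]
    exact quaternion_re_eq_zero_of_semiconjBy_neg hv0 anticomm

end Real

/-- **Wilking's zero-curvature locus computation for `P_ℝT(ℝP³)`.**  Let `a, b`
be unit quaternions and `v` a nonzero purely imaginary quaternion orthogonal to
`i`.  If `ava⁻¹ = bvb⁻¹` then `āb ⊥ i`, and if `ava⁻¹ = −bvb⁻¹` then `āb ⊥ 1`.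
Hence if `ava⁻¹` and `bvb⁻¹` agree up to sign, then `āb ⊥ i` or `āb ⊥ 1`. -/
theorem wilking_zero_curvature_locus
    (a b v : Quaternion ℝ) (ha : ‖a‖ = 1) (hb : ‖b‖ = 1)
    (hv0 : v ≠ 0) (hvre : v.re = 0) (hvi : ⟪v, quatI⟫ = 0) :
    (a * v * a⁻¹ = b * v * b⁻¹ → ⟪star a * b, quatI⟫ = 0)
    ∧ (a * v * a⁻¹ = -(b * v * b⁻¹) → ⟪star a * b, (1 : Quaternion ℝ)⟫ = 0) := by
  have hv : v.im = v := by rw [← sub_re_self, hvre, coe_zero, sub_zero]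
  exact wilking_zero_curvature_locus_general a b (hv.symm ▸ hv0) rfl hvi
end

section
/- Let X = (x₁,x₂) and Y = (y₁,y₂) be elements of Im ℍ × Im ℍ that are linearly independent over ℝ and satisfy [x₁,y₁] = 0, [x₂,y₂] = 0, [x₁+x₂, y₁+y₂] = 0, and [x₁−x₂, y₁−y₂] = 0, where [u,v] = uv − vu is the quaternion commutator. Then there exists a nonzero u ∈ Im ℍ such that the real span of X and Y equals the span of (u,0) and (0,u). -/
open Quaternion

/-!
In the quaternion algebra with `i² = a + b i`, `j² = c` and `ji = b j - ij`, the commutator of two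
elements is a linear function of the cross product of their imaginary parts. When `b² + 4a` and `c`
are nonzero this function is injective, so commuting imaginary elements are linearly dependent,
which reduces the theorem to linear algebra.

If each of the pairs `(x₁, y₁)` and `(x₂, y₂)` lies on a line, the plane spanned by `X` and `Y` is
contained in the product of the two lines, hence equal to it. The map `(v, w) ↦ v + w`
therefore sends the plane onto the sum of the two lines; but the image is spanned by `x₁ + x₂` and
`y₁ + y₂`, which are dependent as well, so the two lines coincide.
-/

section LinearAlgebra

open Submodule

variable {K V W : Type*} [DivisionRing K] [AddCommGroup V] [Module K V] [AddCommGroup W]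
  [Module K W]

theorem exists_span_singleton_eq_span_pair {x y : V} (h : ¬ LinearIndependent K ![x, y]) :
    ∃ p, span K {p} = span K {x, y} := by
  by_cases hx : x = 0
  · exact ⟨y, by rw [hx, span_insert_zero]⟩
  · simp only [LinearIndependent.pair_iff' hx, not_forall, not_not] at h
    obtain ⟨a, rfl⟩ := h
    refine ⟨x, ?_⟩
    rw [Set.pair_comm, span_insert_eq_span (smul_mem _ a (mem_span_singleton_self x))]

theorem span_singleton_prod_span_singleton (p : V) (q : W) :
    (span K {p}).prod (span K {q}) = span K {(p, 0), (0, q)} := by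
  ext ⟨v, w⟩
  simp [mem_span_singleton, mem_span_pair]

theorem span_pair_eq_prod_span_singleton {x₁ y₁ p : V} {x₂ y₂ q : W}
    (hind : LinearIndependent K ![(x₁, x₂), (y₁, y₂)])
    (h₁ : span K {x₁, y₁} ≤ span K {p}) (h₂ : span K {x₂, y₂} ≤ span K {q}) :
    span K {(x₁, x₂), (y₁, y₂)} = (span K {p}).prod (span K {q}) := by
  simp only [span_le, Set.pair_subset_iff, SetLike.mem_coe] at h₁ h₂
  have hle : span K {(x₁, x₂), (y₁, y₂)} ≤ (span K {p}).prod (span K {q}) :=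
    span_le.mpr (Set.pair_subset ⟨h₁.1, h₂.1⟩ ⟨h₁.2, h₂.2⟩)
  have hplane : Module.finrank K (span K {(x₁, x₂), (y₁, y₂)}) = 2 := by
    rw [← Matrix.range_cons_cons_empty _ _ ![]]
    exact finrank_span_eq_card hind
  rw [span_singleton_prod_span_singleton] at hle ⊢
  have hprod : Module.finrank K (span K {(p, (0 : W)), (0, q)}) ≤ 2 := by
    rw [← Matrix.range_cons_cons_empty _ _ ![]]
    exact finrank_range_le_card _
  have := FiniteDimensional.span_of_finite K (Set.toFinite {(p, (0 : W)), (0, q)})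
  exact eq_of_le_of_finrank_le hle (hplane ▸ hprod)

theorem exists_span_pair_eq_span_inl_inr {x₁ x₂ y₁ y₂ : V}
    (hind : LinearIndependent K ![(x₁, x₂), (y₁, y₂)])
    (h₁ : ¬ LinearIndependent K ![x₁, y₁]) (h₂ : ¬ LinearIndependent K ![x₂, y₂])
    (hadd : ¬ LinearIndependent K ![x₁ + x₂, y₁ + y₂]) :
    ∃ u ∈ span K {x₁ + x₂, y₁ + y₂}, u ≠ 0 ∧
      span K {(x₁, x₂), (y₁, y₂)} = span K {(u, 0), (0, u)} := by
  obtain ⟨p, hp⟩ := exists_span_singleton_eq_span_pair h₁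
  obtain ⟨q, hq⟩ := exists_span_singleton_eq_span_pair h₂
  obtain ⟨u, hu⟩ := exists_span_singleton_eq_span_pair hadd
  have hsup : span K {p} ⊔ span K {q} = span K {u} := by
    have hplane := span_pair_eq_prod_span_singleton hind hp.ge hq.ge
    have himage := congrArg (map (LinearMap.coprod .id .id)) hplane
    simpa [LinearMap.map_coprod_prod, map_span, Set.image_pair, ← hu] using himage.symm
  have hspan : span K {(x₁, x₂), (y₁, y₂)} = span K {(u, 0), (0, u)} := by
    rw [← span_singleton_prod_span_singleton]
    exact span_pair_eq_prod_span_singleton hind (hp ▸ hsup ▸ le_sup_left)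
      (hq ▸ hsup ▸ le_sup_right)
  refine ⟨u, hu ▸ mem_span_singleton_self u, ?_, hspan⟩
  rintro rfl
  have hmem : (x₁, x₂) ∈ span K {((0 : V), (0 : V)), (0, 0)} :=
    hspan ▸ subset_span (Set.mem_insert _ _)
  exact hind.ne_zero 0 (by simpa [Prod.mk_zero_zero] using hmem)

end LinearAlgebra

section CommutingQuaternions

variable {K : Type*} [Field K] {a b c : K}

open Matrix in
theorem crossProduct_im_eq_zero_of_commute (hab : b ^ 2 + 4 * a ≠ 0) (hc : c ≠ 0)
    {x y : ℍ[K,a,b,c]} (h : Commute x y) :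
    ![x.imI, x.imJ, x.imK] ⨯₃ ![y.imI, y.imJ, y.imK] = 0 := by
  have hre := congrArg QuaternionAlgebra.re h.eq
  have hI := congrArg QuaternionAlgebra.imI h.eq
  have hJ := congrArg QuaternionAlgebra.imJ h.eq
  have hK := congrArg QuaternionAlgebra.imK h.eq
  simp only [QuaternionAlgebra.re_mul, QuaternionAlgebra.imI_mul, QuaternionAlgebra.imJ_mul,
    QuaternionAlgebra.imK_mul] at hre hI hJ hK
  have hIJ : x.imI * y.imJ - x.imJ * y.imI = 0 :=
    (mul_eq_zero_iff_left hab).mp (by linear_combination 2 * a * hK - b * hJ)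
  have hIK : x.imI * y.imK - x.imK * y.imI = 0 :=
    (mul_eq_zero_iff_left hab).mp (by linear_combination 2 * hJ + b * hK)
  have hJK : x.imJ * y.imK - x.imK * y.imJ = 0 :=
    (mul_eq_zero_iff_left (mul_ne_zero hab hc)).mp (by linear_combination b * hre - 2 * a * hI)
  rw [cross_apply]
  ext i
  fin_cases i
  · simpa using hJK
  · simpa using neg_eq_zero.mpr hIK
  · simpa using hIJ

theorem not_linearIndependent_of_commute_of_re_eq_zero (hab : b ^ 2 + 4 * a ≠ 0) (hc : c ≠ 0)
    {x y : ℍ[K,a,b,c]} (hx : x.re = 0) (hy : y.re = 0) (h : Commute x y) :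
    ¬ LinearIndependent K ![x, y] := by
  have him : ¬ LinearIndependent K ![![x.imI, x.imJ, x.imK], ![y.imI, y.imJ, y.imK]] :=
    crossProduct_ne_zero_iff_linearIndependent.not.mp
      (not_not.mpr (crossProduct_im_eq_zero_of_commute hab hc h))
  contrapose! him
  rw [LinearIndependent.pair_iff] at him ⊢
  intro s t hst
  apply him s t
  ext
  · simp [hx, hy]
  · simpa using congrFun hst 0
  · simpa using congrFun hst 1
  · simpa using congrFun hst 2

theorem zero_curvature_plane_s3s3_general (hab : b ^ 2 + 4 * a ≠ 0) (hc : c ≠ 0)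
    {x₁ x₂ y₁ y₂ : ℍ[K,a,b,c]}
    (hx₁ : x₁.re = 0) (hx₂ : x₂.re = 0) (hy₁ : y₁.re = 0) (hy₂ : y₂.re = 0)
    (hind : LinearIndependent K ![(x₁, x₂), (y₁, y₂)])
    (h₁ : Commute x₁ y₁) (h₂ : Commute x₂ y₂) (hadd : Commute (x₁ + x₂) (y₁ + y₂)) :
    ∃ u : ℍ[K,a,b,c], u ≠ 0 ∧ u.re = 0 ∧
      Submodule.span K {(x₁, x₂), (y₁, y₂)} = Submodule.span K {(u, 0), (0, u)} := by
  have hx : (x₁ + x₂).re = 0 := by simp [hx₁, hx₂]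
  have hy : (y₁ + y₂).re = 0 := by simp [hy₁, hy₂]
  obtain ⟨u, hu, hu0, hspan⟩ := exists_span_pair_eq_span_inl_inr hind
    (not_linearIndependent_of_commute_of_re_eq_zero hab hc hx₁ hy₁ h₁)
    (not_linearIndependent_of_commute_of_re_eq_zero hab hc hx₂ hy₂ h₂)
    (not_linearIndependent_of_commute_of_re_eq_zero hab hc hx hy hadd)
  obtain ⟨s, t, rfl⟩ := Submodule.mem_span_pair.mp hu
  exact ⟨_, hu0, by simp [hx₁, hx₂, hy₁, hy₂], hspan⟩

end CommutingQuaternions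

/-- **Zero-curvature 2-planes on `S³ × S³` with the diagonally scaled metric
(Wilking; Ziller, proof of Theorem 5.1).**  If `X = (x₁,x₂)` and `Y = (y₁,y₂)`
in `Im ℍ × Im ℍ` are linearly independent over `ℝ` and satisfy
`[x₁,y₁] = [x₂,y₂] = [x₁+x₂, y₁+y₂] = [x₁−x₂, y₁−y₂] = 0`, then their real span
equals the span of `(u,0)` and `(0,u)` for some nonzero `u ∈ Im ℍ`. -/
theorem zero_curvature_plane_s3s3
    (x₁ x₂ y₁ y₂ : Quaternion ℝ)
    (hx₁ : x₁.re = 0) (hx₂ : x₂.re = 0) (hy₁ : y₁.re = 0) (hy₂ : y₂.re = 0)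
    (hind : LinearIndependent ℝ
      ![((x₁, x₂) : Quaternion ℝ × Quaternion ℝ), (y₁, y₂)])
    (h₁ : x₁ * y₁ - y₁ * x₁ = 0)
    (h₂ : x₂ * y₂ - y₂ * x₂ = 0)
    (h₃ : (x₁ + x₂) * (y₁ + y₂) - (y₁ + y₂) * (x₁ + x₂) = 0)
    (h₄ : (x₁ - x₂) * (y₁ - y₂) - (y₁ - y₂) * (x₁ - x₂) = 0) :
    ∃ u : Quaternion ℝ, u ≠ 0 ∧ u.re = 0 ∧
      Submodule.span ℝ ({(x₁, x₂), (y₁, y₂)} : Set (Quaternion ℝ × Quaternion ℝ))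
        = Submodule.span ℝ
            ({((u, 0) : Quaternion ℝ × Quaternion ℝ), (0, u)} :
              Set (Quaternion ℝ × Quaternion ℝ)) := by
  exact zero_curvature_plane_s3s3_general (by norm_num) (by norm_num) hx₁ hx₂ hy₁ hy₂ hind
    (sub_eq_zero.mp h₁) (sub_eq_zero.mp h₂) (sub_eq_zero.mp h₃)
end

section
/- Let σ = diag(1,−1,−1) ∈ SU(3) and let H = {diag(1, z, z̄) : z ∈ ℂ, |z| = 1} ≤ SU(3). For g ∈ SU(3), the coset gH is fixed by left multiplication by σ (i.e. there exists z with |z| = 1 such that σ·g = g·diag(1,z,z̄)) if and only if g is block diagonal of the form blockdiag(u, B) with u ∈ U(1) and B ∈ U(2) (equivalently g₁₂ = g₁₃ = g₂₁ = g₃₁ = 0). -/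
open Matrix Complex

/-!
The relation `σ g = g diag(1, z, z̄)` says that the columns of `g` are eigenvectors of `σ` with
eigenvalues `1`, `z`, `z̄`. As `-1 ≠ 1`, the first column is supported in its first entry, so `g` is
block upper triangular. Its inverse `gᴴ` is then block upper triangular as well, which makes the
unitary matrix `g` block diagonal. Conversely, a block diagonal `g` commutes with
`σ = diag(1, -1, -1)`, and `z = -1` works.
-/

section Diagonal

variable {m n R : Type*} [Fintype m] [Fintype n] [DecidableEq m] [DecidableEq n]
  [CommSemiring R] [IsCancelMulZero R]

theorem diagonal_mul_eq_mul_diagonal_iff {d : m → R} {e : n → R} {A : Matrix m n R} :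
    diagonal d * A = A * diagonal e ↔ ∀ i j, d i ≠ e j → A i j = 0 := by
  simp only [← Matrix.ext_iff, diagonal_mul, mul_diagonal, mul_comm (A _ _) (e _),
    mul_eq_mul_right_iff, or_iff_not_imp_left, ne_eq]

end Diagonal

section Unitary

variable {n R α : Type*} [Fintype n] [DecidableEq n] [CommRing R] [StarRing R] [LinearOrder α]
  {g : Matrix n n R} {b : n → α}

theorem blockTriangular_conjTranspose_of_mem_unitaryGroup (hg : g ∈ unitaryGroup n R)
    (hb : g.BlockTriangular b) : gᴴ.BlockTriangular b := by
  have hinv : g * gᴴ = 1 := mem_unitaryGroup_iff.mp hg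
  have : Invertible g := invertibleOfRightInverse g gᴴ hinv
  exact inv_eq_right_inv hinv ▸ blockTriangular_inv_of_blockTriangular hb

theorem apply_eq_zero_of_mem_unitaryGroup_of_blockTriangular (hg : g ∈ unitaryGroup n R)
    (hb : g.BlockTriangular b) {i j : n} (hij : b i ≠ b j) : g i j = 0 := by
  rcases hij.lt_or_gt with hlt | hgt
  · exact star_eq_zero.mp (blockTriangular_conjTranspose_of_mem_unitaryGroup hg hb hlt)
  · exact hb hgt

end Unitary

theorem fixed_point_set_aloff_wallach_w01_general {𝕜 : Type*} [RCLike 𝕜]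
    {g : Matrix (Fin 3) (Fin 3) 𝕜} (hg : g ∈ unitaryGroup (Fin 3) 𝕜) :
    (∃ z : 𝕜, ‖z‖ = 1 ∧
        diagonal ![1, -1, -1] * g = g * diagonal ![1, z, (starRingEnd 𝕜) z])
    ↔ (g 0 1 = 0 ∧ g 0 2 = 0 ∧ g 1 0 = 0 ∧ g 2 0 = 0) := by
  have neg_one_ne_one : (-1 : 𝕜) ≠ 1 := by norm_num
  constructor
  · rintro ⟨z, -, hz⟩
    have support := diagonal_mul_eq_mul_diagonal_iff.mp hz
    have first_column : g 1 0 = 0 ∧ g 2 0 = 0 :=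
      ⟨support 1 0 neg_one_ne_one, support 2 0 neg_one_ne_one⟩
    have triangular : g.BlockTriangular (![0, 1, 1] : Fin 3 → ℕ) := by
      simpa [BlockTriangular, Fin.forall_fin_succ] using first_column
    have block_diagonal {i j : Fin 3} :=
      apply_eq_zero_of_mem_unitaryGroup_of_blockTriangular hg triangular (i := i) (j := j)
    exact ⟨block_diagonal (by simp), block_diagonal (by simp), first_column⟩
  · rintro ⟨h01, h02, h10, h20⟩
    refine ⟨-1, by simp, diagonal_mul_eq_mul_diagonal_iff.mpr ?_⟩
    simp [Fin.forall_fin_succ, h01, h02, h10, h20]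

/-- **Fixed point set of `σ = diag(1,−1,−1)` on `W_{0,1} = SU(3)/H`,
`H = {diag(1,z,z̄)}` (Ziller, Section 4).**  For `g ∈ SU(3)`, the coset `gH` is
fixed by left multiplication by `σ` (i.e. `σg = g·diag(1,z,z̄)` for some unit
`z`) if and only if `g` is block diagonal: `g₁₂ = g₁₃ = g₂₁ = g₃₁ = 0`. -/
theorem fixed_point_set_aloff_wallach_w01
    (g : Matrix (Fin 3) (Fin 3) ℂ) (hg : g * gᴴ = 1) (hdet : g.det = 1) :
    (∃ z : ℂ, ‖z‖ = 1 ∧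
        Matrix.diagonal ![1, -1, -1] * g
          = g * Matrix.diagonal ![1, z, (starRingEnd ℂ) z])
    ↔ (g 0 1 = 0 ∧ g 0 2 = 0 ∧ g 1 0 = 0 ∧ g 2 0 = 0) :=
  fixed_point_set_aloff_wallach_w01_general (mem_unitaryGroup_iff.mpr hg)
end
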